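/- arXiv:math/0610384 — 3 statements merged into one kernel-verified Lean document; each statement's English description precedes it below -/
import Mathlib

section
/- Let G be a finite simple graph in which every vertex has degree 2 or 3, and suppose G has no connected component with exactly 5 vertices. Then λ(G) ≥ v(G)/4. -/
/-- `H` is a path with `k` edges (a "k-edge path"), as a subgraph of `G`. -/
def SimpleGraph.Subgraph.IsKEdgePath {V : Type*} {G : SimpleGraph V}
    (H : G.Subgraph) (k : ℕ) : Prop :=
  ∃ (u v : V) (w : G.Walk u v), w.IsPath ∧ w.length = k ∧ H = w.toSubgraph

/-- `H` is a tree with `k` edges (a "k-edge tree"), as a subgraph of `G`. -/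
def SimpleGraph.Subgraph.IsKEdgeTree {V : Type*} {G : SimpleGraph V}
    (H : G.Subgraph) (k : ℕ) : Prop :=
  H.coe.IsTree ∧ H.edgeSet.ncard = k

/-- The maximum number of pairwise vertex-disjoint `k`-edge paths in `G`. -/
noncomputable def SimpleGraph.lambdaK {V : Type*} (G : SimpleGraph V) (k : ℕ) : ℕ :=
  sSup {n | ∃ P : Finset G.Subgraph,
    (∀ H ∈ P, H.IsKEdgePath k) ∧
    (P : Set G.Subgraph).Pairwise (fun H H' => Disjoint H.verts H'.verts) ∧
    P.card = n}

/-- The maximum number of pairwise vertex-disjoint `k`-edge trees in `G`. -/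
noncomputable def SimpleGraph.tauK {V : Type*} (G : SimpleGraph V) (k : ℕ) : ℕ :=
  sSup {n | ∃ P : Finset G.Subgraph,
    (∀ H ∈ P, H.IsKEdgeTree k) ∧
    (P : Set G.Subgraph).Pairwise (fun H H' => Disjoint H.verts H'.verts) ∧
    P.card = n}

/-!
For a graph of maximum degree 3 we bound the number of vertices of degree at least 2 by four times
the size of a packing plus the number of five-vertex components of minimum degree 2, by induction
on the edge set. Such a component may be split off, since it contains a path and costs one vertex.
If there is none, remove the vertices `W` of some disjoint paths. Everything this destroys (vertices
dropping below degree 2, new five-vertex components) touches a neighbour of `W`, so `k` paths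
whose closed neighbourhood has at most `4k` vertices reduce the claim to a smaller graph. A new
five-vertex component together with the vertex it was attached to contains two disjoint paths.

These reductions dispose of vertices of degree 1, adjacent vertices of degree 3, three consecutive
vertices of degree 2, and vertices of degree 3 all of whose second neighbours have degree 3. In the
remaining graphs every vertex of degree 2 is adjacent to one of degree 3, and each vertex of degree
3 shares at most two of its neighbours with other vertices of degree 3. By Hall's theorem the shared
neighbours can be withheld injectively from one of their two owners, which leaves disjoint
neighbourhoods of at least two vertices: one path for each closed neighbourhood of four vertices.
-/

namespace PathPacking

open Finset
open scoped Classical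

variable {V : Type*} {G H : SimpleGraph V} {W W' : Finset V} {k l : ℕ}

/-- `t` is the vertex set of a 2-edge path of `G`. -/
def IsTwoPath (G : SimpleGraph V) (t : Finset V) : Prop :=
  ∃ a b c, G.Adj a b ∧ G.Adj b c ∧ a ≠ c ∧ t = {a, b, c}

/-- `G` has `k` pairwise disjoint 2-edge paths with all their vertices in `W`; a packing is
recorded by the vertex sets of its paths. -/
def Packs (G : SimpleGraph V) (W : Finset V) (k : ℕ) : Prop :=
  ∃ P : Finset (Finset V), (∀ t ∈ P, IsTwoPath G t ∧ t ⊆ W) ∧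
    (P : Set (Finset V)).PairwiseDisjoint id ∧ #P = k

theorem IsTwoPath.mono {t : Finset V} (hGH : G ≤ H) : IsTwoPath G t → IsTwoPath H t
  | ⟨a, b, c, hab, hbc, hac, ht⟩ => ⟨a, b, c, hGH hab, hGH hbc, hac, ht⟩

theorem IsTwoPath.nonempty {t : Finset V} : IsTwoPath G t → t.Nonempty
  | ⟨a, _, _, _, _, _, ht⟩ => ⟨a, by simp [ht]⟩

theorem IsTwoPath.exists_isKEdgePath {t : Finset V} (ht : IsTwoPath G t) :
    ∃ P : G.Subgraph, P.IsKEdgePath 2 ∧ P.verts = t := by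
  obtain ⟨a, b, c, hab, hbc, hac, rfl⟩ := ht
  refine ⟨(SimpleGraph.Walk.cons hab hbc.toWalk).toSubgraph, ⟨a, c, _, ?_, rfl, rfl⟩, ?_⟩
  · simp [SimpleGraph.Walk.isPath_def, hab.ne, hbc.ne, hac]
  · ext v
    simp [or_comm (a := v = c), or_assoc]

theorem Packs.mono (hGH : G ≤ H) (hW : W ⊆ W') : Packs G W k → Packs H W' k
  | ⟨P, hP, hdisj, hcard⟩ =>
    ⟨P, fun t ht ↦ ⟨(hP t ht).1.mono hGH, (hP t ht).2.trans hW⟩, hdisj, hcard⟩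

theorem packs_zero (G : SimpleGraph V) (W : Finset V) : Packs G W 0 :=
  ⟨∅, by simp, by simp, rfl⟩

theorem packs_one {a b c : V} (hab : G.Adj a b) (hbc : G.Adj b c) (hac : a ≠ c) :
    Packs G {a, b, c} 1 :=
  ⟨{{a, b, c}}, by simpa using ⟨a, b, c, hab, hbc, hac, rfl⟩, by simp, rfl⟩

theorem Packs.union (hW : Packs G W k) (hW' : Packs G W' l) (hdisj : Disjoint W W') :
    Packs G (W ∪ W') (k + l) := by
  obtain ⟨P, hP, hPdisj, rfl⟩ := hW
  obtain ⟨Q, hQ, hQdisj, rfl⟩ := hW'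
  have hPQ : ∀ t ∈ P, ∀ s ∈ Q, Disjoint t s := fun t ht s hs ↦
    hdisj.mono (hP t ht).2 (hQ s hs).2
  refine ⟨P ∪ Q, fun t ht ↦ ?_, ?_, card_union_of_disjoint ?_⟩
  · rcases mem_union.1 ht with ht | ht
    · exact ⟨(hP t ht).1, (hP t ht).2.trans subset_union_left⟩
    · exact ⟨(hQ t ht).1, (hQ t ht).2.trans subset_union_right⟩
  · rw [coe_union]
    exact hPdisj.union hQdisj fun t ht s hs _ ↦ hPQ t ht s hs
  · exact disjoint_left.2 fun t ht ht' ↦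
      (hP t ht).1.nonempty.ne_empty (disjoint_self.1 (hPQ t ht t ht'))

theorem packs_biUnion {ι : Type*} {A : Finset ι} {T : ι → Finset V}
    (hT : ∀ i ∈ A, Packs G (T i) 1) (hdisj : (A : Set ι).PairwiseDisjoint T) :
    Packs G (A.biUnion T) #A := by
  induction A using Finset.induction_on with
  | empty => exact packs_zero G _
  | insert i A hi ih =>
    rw [biUnion_insert, card_insert_of_notMem hi, add_comm]
    rw [coe_insert, Set.pairwiseDisjoint_insert_of_notMem (by simpa using hi)] at hdisj
    refine (hT i (mem_insert_self i A)).union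
      (ih (fun j hj ↦ hT j (mem_insert_of_mem hj)) hdisj.1) ?_
    exact (disjoint_biUnion_right _ _ _).2 hdisj.2

theorem Packs.le_lambdaK [Finite V] (h : Packs G W k) : k ≤ G.lambdaK 2 := by
  have := Fintype.ofFinite V
  obtain ⟨P, hP, hdisj, rfl⟩ := h
  choose f hpath hverts using fun t : P ↦ (hP t t.2).1.exists_isKEdgePath
  have hinj : Function.Injective f := fun s t hst ↦ by
    rw [← Subtype.coe_inj, ← coe_inj, ← hverts, ← hverts, hst]
  refine le_csSup ⟨Fintype.card G.Subgraph, ?_⟩ ⟨univ.image f, ?_, ?_, ?_⟩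
  · rintro _ ⟨Q, -, -, rfl⟩
    exact card_le_univ Q
  · simpa only [mem_image, mem_univ, true_and, forall_exists_index, forall_apply_eq_imp_iff]
      using hpath
  · rw [coe_image, coe_univ, Set.image_univ]
    rintro _ ⟨s, rfl⟩ _ ⟨t, rfl⟩ hst
    rw [hverts, hverts, disjoint_coe]
    exact hdisj s.2 t.2 (Subtype.coe_injective.ne (ne_of_apply_ne f hst))
  · rw [card_image_of_injective _ hinj, card_univ, Fintype.card_coe]

/-- The graph obtained from `G` by deleting every edge that meets `W`. Deleted vertices stay as
isolated vertices, so that all graphs of the induction live on the same vertex type. -/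
def isolate (G : SimpleGraph V) (W : Finset V) : SimpleGraph V where
  Adj u v := G.Adj u v ∧ u ∉ W ∧ v ∉ W
  symm := ⟨fun _ _ h ↦ ⟨h.1.symm, h.2.2, h.2.1⟩⟩
  loopless := ⟨fun _ h ↦ h.1.ne rfl⟩

theorem isolate_le (G : SimpleGraph V) (W : Finset V) : isolate G W ≤ G := fun _ _ h ↦ h.1

theorem isolate_lt (hW : Packs G W k) (hk : k ≠ 0) : isolate G W < G := by
  obtain ⟨P, hP, -, rfl⟩ := hW
  obtain ⟨t, ht⟩ := card_ne_zero.1 hk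
  obtain ⟨⟨a, b, c, hab, -, -, rfl⟩, htW⟩ := hP t ht
  refine (isolate_le G W).lt_of_not_ge fun hle ↦ (hle hab).2.1 (htW ?_)
  exact mem_insert_self a _

variable [Fintype V]

theorem Packs.compl_of_isolate (h : Packs (isolate G W) univ k) : Packs G Wᶜ k := by
  obtain ⟨P, hP, hdisj, hcard⟩ := h
  refine ⟨P, fun t ht ↦ ⟨(hP t ht).1.mono (isolate_le G W), fun v hv ↦ ?_⟩, hdisj, hcard⟩
  obtain ⟨a, b, c, hab, hbc, -, rfl⟩ := (hP t ht).1
  rw [mem_compl]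
  rcases (by simpa using hv : v = a ∨ v = b ∨ v = c) with rfl | rfl | rfl
  exacts [hab.2.1, hab.2.2, hbc.2.2]

theorem exists_adj_iff_of_degree_eq_two {v a : V} (hv : G.degree v = 2) (ha : G.Adj v a) :
    ∃ b, b ≠ a ∧ ∀ w, G.Adj v w ↔ w = a ∨ w = b := by
  have hcard : #((G.neighborFinset v).erase a) = 1 := by
    rw [card_erase_of_mem (by simpa using ha), G.card_neighborFinset_eq_degree, hv]
  obtain ⟨b, hb⟩ := card_eq_one.1 hcard
  have hmem (w : V) : w ≠ a ∧ G.Adj v w ↔ w = b := by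
    rw [← G.mem_neighborFinset, ← mem_erase, hb, mem_singleton]
  exact ⟨b, by grind, by grind⟩

theorem exists_adj_iff_of_degree_eq_three {v a b : V} (hv : G.degree v = 3) (ha : G.Adj v a)
    (hb : G.Adj v b) (hab : a ≠ b) :
    ∃ c, c ≠ a ∧ c ≠ b ∧ ∀ w, G.Adj v w ↔ w = a ∨ w = b ∨ w = c := by
  have hcard : #(((G.neighborFinset v).erase a).erase b) = 1 := by
    rw [card_erase_of_mem (by simpa using ⟨hab.symm, hb⟩), card_erase_of_mem (by simpa using ha),
      G.card_neighborFinset_eq_degree, hv]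
  obtain ⟨c, hc⟩ := card_eq_one.1 hcard
  have hmem (w : V) : w ≠ b ∧ w ≠ a ∧ G.Adj v w ↔ w = c := by
    rw [← G.mem_neighborFinset, ← mem_erase, ← mem_erase, hc, mem_singleton]
  exact ⟨c, by grind, by grind, by grind⟩

/-! ### Five-vertex components and the inductive inequality -/

/-- The vertices of degree at least 2: those that can be the middle of a 2-edge path. -/
noncomputable def interior (G : SimpleGraph V) : Finset V := {v | 2 ≤ G.degree v}

theorem mem_interior {v : V} : v ∈ interior G ↔ 2 ≤ G.degree v := by simp [interior]

/-- `C` is the vertex set of a connected component with five vertices, all of degree at least 2.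
Connectedness needs no clause of its own: a union of components of minimum degree 2 with at most
five vertices is a single component. -/
structure IsFiveComponent (G : SimpleGraph V) (C : Finset V) : Prop where
  card_eq : #C = 5
  two_le_degree : ∀ v ∈ C, 2 ≤ G.degree v
  mem_of_adj : ∀ v ∈ C, ∀ w, G.Adj v w → w ∈ C

/-- `Y` meets every five-vertex component of `G` of minimum degree at least 2. -/
def HitsFive (G : SimpleGraph V) (Y : Finset V) : Prop :=
  ∀ C, IsFiveComponent G C → (C ∩ Y).Nonempty

theorem exists_disjoint_isFiveComponent {Y : Finset V} (h : ¬HitsFive G Y) :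
    ∃ C, IsFiveComponent G C ∧ Disjoint C Y := by
  simpa [HitsFive, not_nonempty_iff_eq_empty, disjoint_iff_inter_eq_empty] using h

/-- The packing inequality proved by induction: each vertex of `Y` stands for a five-vertex
component, where a single 2-edge path pays for only four of the five vertices. -/
def PackingBound (G : SimpleGraph V) (Y : Finset V) : Prop :=
  ∃ k, Packs G univ k ∧ #(interior G) ≤ 4 * k + #Y

variable {C N Y Z : Finset V}

theorem packingBound_of_isolate
    (ih : ∀ G' < G, ∀ Y, HitsFive G' Y → PackingBound G' Y) (hW : Packs G W k) (hk : k ≠ 0)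
    (hits : HitsFive (isolate G W) Y) (hlost : (interior G \ interior (isolate G W)) \ W ⊆ Y)
    (hcard : #(interior G ∩ W) + #Y ≤ 4 * k + #Z) : PackingBound G Z := by
  set lost := (interior G \ interior (isolate G W)) \ W
  have hits' : HitsFive (isolate G W) (Y \ lost) := by
    intro C hC
    obtain ⟨v, hv⟩ := hits C hC
    have := mem_interior.2 (hC.two_le_degree v (mem_inter.1 hv).1)
    exact ⟨v, by grind⟩
  obtain ⟨l, hl, hbound⟩ := ih _ (isolate_lt hW hk) _ hits'
  refine ⟨k + l, (hW.union hl.compl_of_isolate disjoint_compl_right).mono le_rfl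
    (subset_univ _), ?_⟩
  have hsplit : interior G ⊆ (interior G ∩ W) ∪ lost ∪ interior (isolate G W) := by
    intro v hv
    grind
  have h₁ := card_le_card hsplit
  have h₂ := card_union_le (interior G ∩ W ∪ lost) (interior (isolate G W))
  have h₃ := card_union_le (interior G ∩ W) lost
  have h₄ := card_sdiff_add_card_eq_card hlost
  omega

/-- What is known about a graph when the packing inequality is proved by induction on the edge set
and no five-vertex component has to be split off. -/
structure HereditarilyBounded (G : SimpleGraph V) : Prop where
  degree_le : ∀ v, G.degree v ≤ 3
  not_isFiveComponent : ∀ C, ¬IsFiveComponent G C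
  bound_of_lt : ∀ G' < G, ∀ Y, HitsFive G' Y → PackingBound G' Y

theorem notMem_of_degree_isolate_pos {v : V} (hv : 0 < (isolate G W).degree v) : v ∉ W := by
  obtain ⟨w, hw⟩ := (SimpleGraph.degree_pos_iff_exists_adj _ v).1 hv
  exact hw.2.1

theorem IsFiveComponent.notMem_of_isolate (hC : IsFiveComponent (isolate G W) C) {v : V}
    (hv : v ∈ C) : v ∉ W :=
  notMem_of_degree_isolate_pos (two_pos.trans_le (hC.two_le_degree v hv))

theorem IsFiveComponent.mem_or_mem_of_adj (hC : IsFiveComponent (isolate G W) C) {v w : V}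
    (hv : v ∈ C) (hvw : G.Adj v w) : w ∈ C ∨ w ∈ W := by
  by_contra! hw
  exact hw.1 (hC.mem_of_adj v hv w ⟨hvw, hC.notMem_of_isolate hv, hw.2⟩)

theorem exists_adj_of_isFiveComponent_of_le (hG : ∀ C, ¬IsFiveComponent G C) (hHG : H ≤ G)
    (hC : IsFiveComponent H C) : ∃ v ∈ C, ∃ w ∉ C, G.Adj v w := by
  by_contra! hclosed
  refine hG C ⟨hC.card_eq, fun v hv ↦ ?_, fun v hv w hvw ↦ ?_⟩
  · exact (hC.two_le_degree v hv).trans (SimpleGraph.degree_le_of_le hHG)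
  · by_contra hw
    exact hclosed v hv w hw hvw

theorem exists_adj_mem_of_isFiveComponent_isolate (hG : ∀ C, ¬IsFiveComponent G C)
    (hC : IsFiveComponent (isolate G W) C) : ∃ v ∈ C, ∃ w ∈ W, G.Adj v w := by
  obtain ⟨v, hv, w, hw, hvw⟩ := exists_adj_of_isFiveComponent_of_le hG (isolate_le G W) hC
  exact ⟨v, hv, w, (hC.mem_or_mem_of_adj hv hvw).resolve_left hw, hvw⟩

theorem degree_le_degree_isolate_add_one {v z : V} (hv : v ∉ W)
    (hz : ∀ w ∈ W, G.Adj v w → w = z) : G.degree v ≤ (isolate G W).degree v + 1 := by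
  rw [← G.card_neighborFinset_eq_degree, ← Nat.sub_le_iff_le_add]
  refine pred_card_le_card_erase.trans (card_le_card (s := (G.neighborFinset v).erase z) ?_)
  intro w hw
  rw [mem_erase, SimpleGraph.mem_neighborFinset] at hw
  rw [SimpleGraph.mem_neighborFinset]
  exact ⟨hw.2, hv, fun hwW ↦ hw.1 (hz w hwW hw.2)⟩

theorem exists_adj_mem_of_degree_isolate_lt {v : V} (hv : v ∉ W)
    (hlt : (isolate G W).degree v < G.degree v) : ∃ w ∈ W, G.Adj v w := by
  by_contra! h
  refine hlt.not_ge (card_le_card fun w hw ↦ ?_)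
  rw [SimpleGraph.mem_neighborFinset] at hw ⊢
  exact ⟨hw, hv, fun hwW ↦ h w hwW hw⟩

theorem exists_adj_ne_of_two_le_degree {v : V} (hv : 2 ≤ G.degree v) (z : V) :
    ∃ w, G.Adj v w ∧ w ≠ z := by
  obtain ⟨w, hw, hwz⟩ := exists_mem_ne (hv : 1 < #(G.neighborFinset v)) z
  exact ⟨w, (G.mem_neighborFinset v w).1 hw, hwz⟩

theorem two_le_degree_of_adj_of_adj {v a b : V} (ha : G.Adj v a) (hb : G.Adj v b) (hab : a ≠ b) :
    2 ≤ G.degree v :=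
  one_lt_card.2 ⟨a, (G.mem_neighborFinset v a).2 ha, b, (G.mem_neighborFinset v b).2 hb, hab⟩

/-! ### Two paths in a five-vertex component with one extra neighbour -/

theorem IsFiveComponent.degree_eq_two {x y : V} (hC : IsFiveComponent H C) (hHG : H ≤ G)
    (hx : x ∈ C) (hxy : G.Adj x y) (hy : y ∉ C) (hdeg : G.degree x ≤ 3) : H.degree x = 2 := by
  refine le_antisymm (Nat.le_of_lt_succ (lt_of_lt_of_le (card_lt_card ?_) hdeg))
    (hC.two_le_degree x hx)
  refine (Finset.ssubset_iff_of_subset fun w hw ↦ ?_).2 ⟨y, ?_, ?_⟩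
  · exact (G.mem_neighborFinset x w).2 (hHG ((H.mem_neighborFinset x w).1 hw))
  · exact (G.mem_neighborFinset x y).2 hxy
  · exact fun h ↦ hy (hC.mem_of_adj x hx y ((H.mem_neighborFinset x y).1 h))

theorem IsFiveComponent.exists_adj_packs_one {x : V} (hC : IsFiveComponent H C) (hx : x ∈ C)
    (hdeg : H.degree x = 2) : ∃ u, H.Adj x u ∧ Packs H ((C.erase x).erase u) 1 := by
  obtain ⟨u, hxu⟩ := (H.degree_pos_iff_exists_adj x).1 (by omega)
  obtain ⟨v, hvu, hxadj⟩ := exists_adj_iff_of_degree_eq_two hdeg hxu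
  have hxv : H.Adj x v := (hxadj v).2 (.inr rfl)
  have hu : u ∈ C := hC.mem_of_adj x hx u hxu
  have hv : v ∈ C := hC.mem_of_adj x hx v hxv
  have hne : x ≠ u ∧ x ≠ v := ⟨hxu.ne, hxv.ne⟩
  have hrest : #(C \ {x, u, v}) = 2 := by
    rw [card_sdiff_of_subset (by grind), hC.card_eq,
      card_eq_three.2 ⟨x, u, v, hne.1, hne.2, hvu.symm, rfl⟩]
  obtain ⟨a, b, hab, hrest⟩ := card_eq_two.1 hrest
  have hmem (w : V) : (w ∈ C ∧ w ≠ x ∧ w ≠ u ∧ w ≠ v) ↔ w = a ∨ w = b := by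
    rw [← mem_singleton (a := b), ← mem_insert, ← hrest]
    simp
  have ha := (hmem a).2 (.inl rfl)
  have hb := (hmem b).2 (.inr rfl)
  have hnbr {c w : V} (hc : c = a ∨ c = b) (hcw : H.Adj c w) : w = u ∨ w = v ∨ w = a ∨ w = b := by
    have hwC := hC.mem_of_adj c ((hmem c).2 hc).1 w hcw
    have hwx : w ≠ x := by
      rintro rfl
      exact absurd ((hxadj c).1 hcw.symm) (by grind)
    grind
  by_cases hadj : H.Adj a b
  · obtain ⟨w, haw, hwb⟩ := exists_adj_ne_of_two_le_degree (hC.two_le_degree a ha.1) b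
    rcases hnbr (.inl rfl) haw with rfl | rfl | rfl | rfl
    · exact ⟨v, hxv, (packs_one haw.symm hadj hwb).mono le_rfl (by grind)⟩
    · exact ⟨u, hxu, (packs_one haw.symm hadj hwb).mono le_rfl (by grind)⟩
    · exact absurd rfl haw.ne
    · exact absurd rfl hwb
  · have hthird {c : V} (hc : c = a ∨ c = b) : H.Adj c v := by
      obtain ⟨w, hcw, hwu⟩ :=
        exists_adj_ne_of_two_le_degree (hC.two_le_degree c ((hmem c).2 hc).1) u
      have := hnbr hc hcw
      have := hcw.ne
      grind [SimpleGraph.adj_comm]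
    exact ⟨u, hxu, (packs_one (hthird (.inl rfl)) (hthird (.inr rfl)).symm hab).mono le_rfl
      (by grind)⟩

theorem IsFiveComponent.packs_two {x y : V} (hC : IsFiveComponent H C) (hHG : H ≤ G) (hx : x ∈ C)
    (hxy : G.Adj x y) (hy : y ∉ C) (hdeg : G.degree x ≤ 3) : Packs G (insert y C) 2 := by
  obtain ⟨u, hxu, hrest⟩ := hC.exists_adj_packs_one hx (hC.degree_eq_two hHG hx hxy hy hdeg)
  have hu : u ∈ C := hC.mem_of_adj x hx u hxu
  have hyu : y ≠ u := fun h ↦ hy (h ▸ hu)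
  refine ((hrest.mono hHG subset_rfl).union (packs_one hxy.symm (hHG hxu) hyu) ?_).mono le_rfl ?_
  · simp only [disjoint_insert_right, disjoint_singleton_right, mem_erase]
    grind
  · grind

namespace HereditarilyBounded

/-- Remove `k` disjoint paths: every five-vertex component and every vertex of degree below 2 that
this creates is adjacent to a removed vertex, so everything lost lies in `N`. -/
theorem packingBound_of_closedNbhd (hG : HereditarilyBounded G) (hW : Packs G W k) (hk : k ≠ 0)
    (hN : ∀ v, 2 ≤ G.degree v → (v ∈ W ∨ ∃ w ∈ W, G.Adj w v) → v ∈ N) (hcard : #N ≤ 4 * k) :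
    PackingBound G ∅ := by
  refine packingBound_of_isolate (Y := N \ W) hG.bound_of_lt hW hk ?_ ?_ ?_
  · intro C hC
    obtain ⟨v, hv, w, hw, hvw⟩ :=
      exists_adj_mem_of_isFiveComponent_isolate hG.not_isFiveComponent hC
    have hdeg := (hC.two_le_degree v hv).trans (SimpleGraph.degree_le_of_le (isolate_le G W))
    have hvN := hN v hdeg (.inr ⟨w, hw, hvw.symm⟩)
    exact ⟨v, mem_inter.2 ⟨hv, mem_sdiff.2 ⟨hvN, hC.notMem_of_isolate hv⟩⟩⟩
  · intro v hv
    simp only [mem_sdiff, mem_interior, not_le] at hv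
    obtain ⟨⟨hdeg, hlt⟩, hvW⟩ := hv
    obtain ⟨w, hw, hvw⟩ := exists_adj_mem_of_degree_isolate_lt hvW (hlt.trans_le hdeg)
    exact mem_sdiff.2 ⟨hN v hdeg (.inr ⟨w, hw, hvw.symm⟩), hvW⟩
  · have hsub : interior G ∩ W ⊆ N ∩ W := by
      intro v hv
      rw [mem_inter, mem_interior] at hv
      exact mem_inter.2 ⟨hN v hv.1 (.inl hv.2), hv.2⟩
    have h₁ := card_le_card hsub
    have h₂ := card_inter_add_card_sdiff N W
    rw [card_empty]
    omega

theorem packingBound_of_isFiveComponent_of_le {x y : V} (hG : HereditarilyBounded G)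
    (hHG : H ≤ G) (hC : IsFiveComponent H C) (hx : x ∈ C) (hxy : G.Adj x y) (hy : y ∉ C)
    (hleave : ∀ v ∈ C, ∀ w ∉ C, G.Adj v w → w = y) : PackingBound G ∅ := by
  refine hG.packingBound_of_closedNbhd (N := insert y C ∪ (G.neighborFinset y).erase x)
    (hC.packs_two hHG hx hxy hy (hG.degree_le x)) two_ne_zero ?_ ?_
  · rintro v - (hv | ⟨w, hw, hwv⟩)
    · exact mem_union_left _ hv
    · have := G.mem_neighborFinset y v
      grind [SimpleGraph.adj_comm]
  · have h₁ := card_union_le (insert y C) ((G.neighborFinset y).erase x)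
    have h₂ := card_erase_of_mem ((G.mem_neighborFinset y x).2 hxy.symm)
    rw [G.card_neighborFinset_eq_degree] at h₂
    rw [card_insert_of_notMem hy, hC.card_eq] at h₁
    have := hG.degree_le y
    omega

end HereditarilyBounded

/-! ### Degree one, and adjacent vertices of degree different from two -/

theorem interior_subset_interior_deleteEdges {x y : V} (hx : G.degree x ≠ 2)
    (hy : G.degree y ≠ 2) : interior G ⊆ interior (G.deleteEdges {s(x, y)}) := by
  have hend {a b : V} (ha : G.degree a ≠ 2) (ha' : a ∈ interior G) :
      a ∈ interior (G.deleteEdges {s(a, b)}) := by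
    rw [mem_interior] at ha' ⊢
    have hcard : 2 ≤ #((G.neighborFinset a).erase b) := by
      have := pred_card_le_card_erase (s := G.neighborFinset a) (a := b)
      rw [G.card_neighborFinset_eq_degree] at this
      omega
    refine hcard.trans (card_le_card fun w hw ↦ ?_)
    simp only [mem_erase, SimpleGraph.mem_neighborFinset, SimpleGraph.deleteEdges_adj] at hw ⊢
    grind
  intro v hv
  rcases eq_or_ne v x with rfl | hvx
  · exact hend hx hv
  rcases eq_or_ne v y with rfl | hvy
  · rw [Sym2.eq_swap]
    exact hend hy hv
  · rw [mem_interior] at hv ⊢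
    refine hv.trans (card_le_card fun w hw ↦ ?_)
    rw [SimpleGraph.mem_neighborFinset] at hw ⊢
    rw [SimpleGraph.deleteEdges_adj]
    grind

namespace HereditarilyBounded

theorem packingBound_of_adj_of_degree_ne_two {x y : V} (hG : HereditarilyBounded G)
    (hxy : G.Adj x y) (hx : G.degree x ≠ 2) (hy : G.degree y ≠ 2) : PackingBound G ∅ := by
  by_cases hits : HitsFive (G.deleteEdges {s(x, y)}) ∅
  · have hlt : G.deleteEdges {s(x, y)} < G :=
      (G.deleteEdges_le _).lt_of_not_ge fun hle ↦ by simpa using hle hxy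
    obtain ⟨k, hk, hbound⟩ := hG.bound_of_lt _ hlt ∅ hits
    refine ⟨k, hk.mono (G.deleteEdges_le _) subset_rfl, ?_⟩
    exact (card_le_card (interior_subset_interior_deleteEdges hx hy)).trans hbound
  · obtain ⟨C, hC, -⟩ := exists_disjoint_isFiveComponent hits
    have hedge {v w : V} (hv : v ∈ C) (hw : w ∉ C) (hvw : G.Adj v w) : s(v, w) = s(x, y) := by
      by_contra hne
      exact hw (hC.mem_of_adj v hv w (G.deleteEdges_adj.2 ⟨hvw, hne⟩))
    obtain ⟨v, hv, w, hw, hvw⟩ := exists_adj_of_isFiveComponent_of_le hG.not_isFiveComponent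
      (G.deleteEdges_le _) hC
    refine hG.packingBound_of_isFiveComponent_of_le (G.deleteEdges_le _) hC hv hvw hw ?_
    intro a ha b hb hab
    rcases Sym2.eq_iff.1 ((hedge ha hb hab).trans (hedge hv hw hvw).symm) with h | h
    · exact h.2
    · exact absurd (h.1 ▸ ha) hw

theorem packingBound_of_degree_eq_one {v : V} (hG : HereditarilyBounded G)
    (hv : G.degree v = 1) : PackingBound G ∅ := by
  obtain ⟨u, hvu, huniq⟩ := SimpleGraph.degree_eq_one_iff_existsUnique_adj.1 hv
  by_cases hu : G.degree u = 2
  swap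
  · exact hG.packingBound_of_adj_of_degree_ne_two hvu (by omega) hu
  obtain ⟨w, hwv, huadj⟩ := exists_adj_iff_of_degree_eq_two hu hvu.symm
  have huw : G.Adj u w := (huadj w).2 (.inr rfl)
  refine hG.packingBound_of_closedNbhd (N := {u, w} ∪ (G.neighborFinset w).erase u)
    (packs_one hvu huw hwv.symm) one_ne_zero ?_ ?_
  · rintro a ha (haW | ⟨b, hb, hba⟩) <;>
      grind [SimpleGraph.mem_neighborFinset, SimpleGraph.adj_comm]
  · have h₁ := card_union_le {u, w} ((G.neighborFinset w).erase u)
    have h₂ := card_erase_of_mem ((G.mem_neighborFinset w u).2 huw.symm)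
    have h₃ : #{u, w} ≤ 2 := card_le_two
    rw [G.card_neighborFinset_eq_degree] at h₂
    have := hG.degree_le w
    omega

theorem packingBound_or_degree_eq {v w : V} (hG : HereditarilyBounded G) (hvw : G.Adj v w) :
    PackingBound G ∅ ∨ G.degree v = 2 ∨ G.degree v = 3 := by
  have hpos : 0 < G.degree v := (G.degree_pos_iff_exists_adj v).2 ⟨w, hvw⟩
  have hle := hG.degree_le v
  by_cases hv : G.degree v = 1
  · exact .inl (hG.packingBound_of_degree_eq_one hv)
  · exact .inr (by omega)

/-! ### Three consecutive vertices of degree two -/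

section Run

variable {p₁ p₂ p₃ x y : V}

/-- Either `y` pays for all that is lost with the path `p₁p₂p₃`, or the removal of this path creates
a five-vertex component through `x`, which absorbs `p₁` and contributes two paths. -/
theorem packingBound_of_run_of_degree_eq_three (hG : HereditarilyBounded G)
    (hp₁ : ∀ w, G.Adj p₁ w ↔ w = p₂ ∨ w = x) (hp₂ : ∀ w, G.Adj p₂ w ↔ w = p₁ ∨ w = p₃)
    (hp₃ : ∀ w, G.Adj p₃ w ↔ w = p₂ ∨ w = y) (h₁₃ : p₁ ≠ p₃) (hxp₃ : x ≠ p₃)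
    (hx : G.degree x = 3) : PackingBound G ∅ := by
  have hpath : Packs G {p₁, p₂, p₃} 1 :=
    packs_one ((hp₁ p₂).2 (.inl rfl)) ((hp₂ p₃).2 (.inr rfl)) h₁₃
  have hadj {v w : V} (hw : w ∈ ({p₁, p₂, p₃} : Finset V)) (hv : v ∉ ({p₁, p₂, p₃} : Finset V))
      (hvw : G.Adj v w) : v = x ∧ w = p₁ ∨ v = y ∧ w = p₃ := by
    grind [SimpleGraph.adj_comm]
  by_cases hits : HitsFive (isolate G {p₁, p₂, p₃}) {y}
  · refine packingBound_of_isolate hG.bound_of_lt hpath one_ne_zero hits ?_ ?_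
    · intro v hv
      simp only [mem_sdiff, mem_interior, not_le] at hv
      obtain ⟨⟨hdeg, hlt⟩, hvW⟩ := hv
      obtain ⟨w, hw, hvw⟩ := exists_adj_mem_of_degree_isolate_lt hvW (hlt.trans_le hdeg)
      by_contra hvy
      obtain ⟨rfl, -⟩ : v = x ∧ w = p₁ := by grind
      have := degree_le_degree_isolate_add_one (G := G) (z := p₁) hvW fun w hw hvw ↦ by grind
      omega
    · have h₁ := card_le_card (inter_subset_right (s₁ := interior G) (s₂ := {p₁, p₂, p₃}))
      have h₂ : #{p₁, p₂, p₃} ≤ 3 := card_le_three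
      rw [card_singleton, card_empty]
      omega
  · obtain ⟨C, hC, hyC⟩ := exists_disjoint_isFiveComponent hits
    rw [disjoint_singleton_right] at hyC
    have hleave {v w : V} (hv : v ∈ C) (hw : w ∉ C) (hvw : G.Adj v w) : v = x ∧ w = p₁ := by
      have hvW := hC.notMem_of_isolate hv
      have := hadj ((hC.mem_or_mem_of_adj hv hvw).resolve_left hw) hvW hvw
      grind
    obtain ⟨v, hv, w, hw, hvw⟩ := exists_adj_of_isFiveComponent_of_le hG.not_isFiveComponent
      (isolate_le G _) hC
    exact hG.packingBound_of_isFiveComponent_of_le (isolate_le G _) hC hv hvw hw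
      fun a ha b hb hab ↦ (hleave ha hb hab).2.trans (hleave hv hw hvw).2.symm

theorem packingBound_of_long_run {w : V} (hG : HereditarilyBounded G)
    (hx : ∀ v, G.Adj x v ↔ v = p₁ ∨ v = w) (hp₁ : ∀ v, G.Adj p₁ v ↔ v = p₂ ∨ v = x)
    (hp₂ : ∀ v, G.Adj p₂ v ↔ v = p₁ ∨ v = p₃) (hp₃ : ∀ v, G.Adj p₃ v ↔ v = p₂ ∨ v = y)
    (h₁₃ : p₁ ≠ p₃) (hxp₂ : x ≠ p₂) (hxp₃ : x ≠ p₃) (hyp₂ : y ≠ p₂) (hxy : x ≠ y) (hwp₁ : w ≠ p₁)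
    (hwy : w ≠ y) (hw : G.degree w = 2) (hy : G.degree y = 2) : PackingBound G ∅ := by
  have hwx : G.Adj w x := ((hx w).2 (.inr rfl)).symm
  have hxp₁ : G.Adj x p₁ := (hx p₁).2 (.inl rfl)
  have hp₂₃ : G.Adj p₂ p₃ := (hp₂ p₃).2 (.inr rfl)
  have hp₃y : G.Adj p₃ y := (hp₃ y).2 (.inr rfl)
  obtain ⟨a, -, hwadj⟩ := exists_adj_iff_of_degree_eq_two hw hwx
  obtain ⟨b, -, hyadj⟩ := exists_adj_iff_of_degree_eq_two hy hp₃y.symm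
  have hpaths : Packs G ({w, x, p₁} ∪ {p₂, p₃, y}) 2 := by
    refine (packs_one hwx hxp₁ hwp₁).union (packs_one hp₂₃ hp₃y hyp₂.symm) ?_
    have hne : x ≠ p₁ ∧ p₁ ≠ p₂ ∧ p₂ ≠ p₃ :=
      ⟨hxp₁.ne, ((hp₁ p₂).2 (.inl rfl)).ne, hp₂₃.ne⟩
    have hy : y ≠ p₁ := by
      rintro rfl
      have := (hp₁ p₃).1 hp₃y.symm
      grind
    have hw : w ≠ p₂ ∧ w ≠ p₃ := by grind
    simp only [disjoint_insert_left, disjoint_singleton_left]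
    grind
  refine hG.packingBound_of_closedNbhd (N := ({w, x, p₁} ∪ {p₂, p₃, y}) ∪ {a, b}) hpaths
    two_ne_zero ?_ ?_
  · intro v _ hv
    simp only [mem_union, mem_insert, mem_singleton] at hv ⊢
    grind
  · have h₁ := card_union_le ({w, x, p₁} ∪ {p₂, p₃, y}) {a, b}
    have h₂ := card_union_le {w, x, p₁} {p₂, p₃, y}
    have h₃ : #{w, x, p₁} ≤ 3 := card_le_three
    have h₄ : #{p₂, p₃, y} ≤ 3 := card_le_three
    have h₅ : #{a, b} ≤ 2 := card_le_two
    omega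

theorem packingBound_of_run_of_degree_eq_two (hG : HereditarilyBounded G)
    (hp₁ : ∀ v, G.Adj p₁ v ↔ v = p₂ ∨ v = x) (hp₂ : ∀ v, G.Adj p₂ v ↔ v = p₁ ∨ v = p₃)
    (hp₃ : ∀ v, G.Adj p₃ v ↔ v = p₂ ∨ v = y) (h₁₃ : p₁ ≠ p₃) (hxp₂ : x ≠ p₂) (hxp₃ : x ≠ p₃)
    (hyp₁ : y ≠ p₁) (hyp₂ : y ≠ p₂) (hxy : x ≠ y) (hx : G.degree x = 2) (hy : G.degree y = 2) :
    PackingBound G ∅ := by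
  have hxp₁ : G.Adj x p₁ := ((hp₁ x).2 (.inr rfl)).symm
  have hp₂₃ : G.Adj p₂ p₃ := (hp₂ p₃).2 (.inr rfl)
  have hyp₃ : G.Adj y p₃ := ((hp₃ y).2 (.inr rfl)).symm
  obtain ⟨w, hwp₁, hxadj⟩ := exists_adj_iff_of_degree_eq_two hx hxp₁
  have hxw : G.Adj x w := (hxadj w).2 (.inr rfl)
  rcases hG.packingBound_or_degree_eq hxw.symm with h | hw | hw
  · exact h
  · by_cases hwy : w = y
    · subst hwy
      obtain ⟨z, -, hyadj⟩ := exists_adj_iff_of_degree_eq_two hy hyp₃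
      have hne : p₁ ≠ p₂ ∧ p₂ ≠ p₃ ∧ p₃ ≠ w ∧ x ≠ p₁ :=
        ⟨((hp₁ p₂).2 (.inl rfl)).ne, hp₂₃.ne, hyp₃.ne', hxp₁.ne⟩
      refine absurd ⟨?_, ?_, ?_⟩ (hG.not_isFiveComponent {x, p₁, p₂, p₃, w})
      · grind
      · have hdeg₁ : 2 ≤ G.degree p₁ :=
          two_le_degree_of_adj_of_adj ((hp₁ p₂).2 (.inl rfl)) hxp₁.symm hxp₂.symm
        have hdeg₂ : 2 ≤ G.degree p₂ :=
          two_le_degree_of_adj_of_adj ((hp₂ p₁).2 (.inl rfl)) hp₂₃ h₁₃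
        have hdeg₃ : 2 ≤ G.degree p₃ :=
          two_le_degree_of_adj_of_adj hp₂₃.symm hyp₃.symm hyp₂.symm
        simp only [mem_insert, mem_singleton]
        grind
      · have := (hyadj x).1 hxw.symm
        simp only [mem_insert, mem_singleton]
        grind
    · exact hG.packingBound_of_long_run hxadj hp₁ hp₂ hp₃ h₁₃ hxp₂ hxp₃ hyp₂ hxy hwp₁ hwy hw hy
  · have hwp₂ : w ≠ p₂ := by
      rintro rfl
      exact (not_or.2 ⟨hxp₁.ne, hxp₃⟩) ((hp₂ x).1 hxw.symm)
    exact hG.packingBound_of_run_of_degree_eq_three hxadj (fun v ↦ (hp₁ v).trans or_comm) hp₂ hxp₂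
      hwp₂ hw

theorem packingBound_of_run (hG : HereditarilyBounded G) (h₁₂ : G.Adj p₁ p₂) (h₂₃ : G.Adj p₂ p₃)
    (h₁₃ : p₁ ≠ p₃) (hdeg₁ : G.degree p₁ = 2) (hdeg₂ : G.degree p₂ = 2)
    (hdeg₃ : G.degree p₃ = 2) : PackingBound G ∅ := by
  obtain ⟨x, hxp₂, hp₁⟩ := exists_adj_iff_of_degree_eq_two hdeg₁ h₁₂
  obtain ⟨y, hyp₂, hp₃⟩ := exists_adj_iff_of_degree_eq_two hdeg₃ h₂₃.symm
  have hp₂ : ∀ v, G.Adj p₂ v ↔ v = p₁ ∨ v = p₃ := by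
    obtain ⟨z, -, hp₂⟩ := exists_adj_iff_of_degree_eq_two hdeg₂ h₁₂.symm
    grind
  have hxp₁ : G.Adj x p₁ := ((hp₁ x).2 (.inr rfl)).symm
  have hyp₃ : G.Adj y p₃ := ((hp₃ y).2 (.inr rfl)).symm
  by_cases hshort : x = p₃ ∨ x = y
  · refine hG.packingBound_of_closedNbhd (N := {p₁, p₂, p₃, x}) (packs_one h₁₂ h₂₃ h₁₃) one_ne_zero
      ?_ card_le_four
    intro v _ hv
    simp only [mem_insert, mem_singleton] at hv ⊢
    have := h₁₂.ne
    grind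
  obtain ⟨hxp₃, hxy⟩ := not_or.1 hshort
  have hyp₁ : y ≠ p₁ := by
    rintro rfl
    exact (not_or.2 ⟨h₂₃.ne', hxp₃ ∘ Eq.symm⟩) ((hp₁ p₃).1 hyp₃)
  rcases hG.packingBound_or_degree_eq hxp₁ with h | hx | hx
  · exact h
  swap
  · exact hG.packingBound_of_run_of_degree_eq_three hp₁ hp₂ hp₃ h₁₃ hxp₃ hx
  rcases hG.packingBound_or_degree_eq hyp₃ with h | hy | hy
  · exact h
  swap
  · exact hG.packingBound_of_run_of_degree_eq_three hp₃ (fun v ↦ (hp₂ v).trans or_comm) hp₁ h₁₃.symm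
      hyp₁ hy
  exact hG.packingBound_of_run_of_degree_eq_two hp₁ hp₂ hp₃ h₁₃ hxp₂ hxp₃ hyp₁ hyp₂ hxy hx hy

end Run

end HereditarilyBounded

/-! ### Vertices of degree three at distance two only from vertices of degree three -/

/-- The claw with centre `x` whose edges are subdivided by the vertices `p₁`, `p₂`, `p₃` of degree
2 and whose outer ends `y₁`, `y₂`, `y₃` have degree 3; the outer ends need not be distinct. -/
structure IsSubdividedClaw (G : SimpleGraph V) (x p₁ p₂ p₃ y₁ y₂ y₃ : V) : Prop where
  adj_center : ∀ w, G.Adj x w ↔ w = p₁ ∨ w = p₂ ∨ w = p₃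
  adj₁ : ∀ w, G.Adj p₁ w ↔ w = x ∨ w = y₁
  adj₂ : ∀ w, G.Adj p₂ w ↔ w = x ∨ w = y₂
  adj₃ : ∀ w, G.Adj p₃ w ↔ w = x ∨ w = y₃
  ne₁₂ : p₁ ≠ p₂
  ne₁₃ : p₁ ≠ p₃
  ne₂₃ : p₂ ≠ p₃
  outer_ne : y₁ ≠ x ∧ y₂ ≠ x ∧ y₃ ≠ x
  degree_center : G.degree x = 3
  degree_middle : G.degree p₁ = 2 ∧ G.degree p₂ = 2 ∧ G.degree p₃ = 2
  degree_outer : G.degree y₁ = 3 ∧ G.degree y₂ = 3 ∧ G.degree y₃ = 3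

namespace IsSubdividedClaw

variable {x p₁ p₂ p₃ y y₁ y₂ y₃ : V}

theorem rotate (h : IsSubdividedClaw G x p₁ p₂ p₃ y₁ y₂ y₃) :
    IsSubdividedClaw G x p₂ p₃ p₁ y₂ y₃ y₁ := by
  obtain ⟨hx, h₁, h₂, h₃, h₁₂, h₁₃, h₂₃, hy, hdx, hdp, hdy⟩ := h
  exact ⟨by grind, h₂, h₃, h₁, h₂₃, h₁₂.symm, h₁₃.symm, by grind, hdx, by grind, by grind⟩

theorem isFiveComponent (h : IsSubdividedClaw G x p₁ p₂ p₃ y y y) :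
    IsFiveComponent G {x, p₁, p₂, p₃, y} := by
  obtain ⟨hx, h₁, h₂, h₃, h₁₂, h₁₃, h₂₃, hy, hdx, hdp, hdy⟩ := h
  obtain ⟨q, -, -, hyadj⟩ := exists_adj_iff_of_degree_eq_three hdy.1
    ((h₁ y).2 (.inr rfl)).symm ((h₂ y).2 (.inr rfl)).symm h₁₂
  have hyp₃ := (hyadj p₃).1 ((h₃ y).2 (.inr rfl)).symm
  refine ⟨?_, ?_, ?_⟩
  · grind
  · simp only [mem_insert, mem_singleton]
    grind
  · simp only [mem_insert, mem_singleton]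
    grind

theorem packingBound_of_outer_eq (h : IsSubdividedClaw G x p₁ p₂ p₃ y y y₃)
    (hG : HereditarilyBounded G) (hyy₃ : y ≠ y₃) : PackingBound G ∅ := by
  obtain ⟨hx, h₁, h₂, h₃, h₁₂, h₁₃, h₂₃, hy, hdx, hdp, hdy⟩ := h
  have hp₂y : G.Adj p₂ y := (h₂ y).2 (.inr rfl)
  obtain ⟨q, hqp₁, hqp₂, hyadj⟩ := exists_adj_iff_of_degree_eq_three hdy.1
    ((h₁ y).2 (.inr rfl)).symm hp₂y.symm h₁₂
  have hyq : G.Adj y q := (hyadj q).2 (.inr (.inr rfl))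
  rcases hG.packingBound_or_degree_eq hyq.symm with h | hq | hq
  · exact h
  swap
  · exact hG.packingBound_of_adj_of_degree_ne_two hyq (by omega) (by omega)
  obtain ⟨r, -, hqadj⟩ := exists_adj_iff_of_degree_eq_two hq hyq.symm
  have hqp₃ : q ≠ p₃ := by
    rintro rfl
    have := (h₃ y).1 hyq.symm
    grind
  have hpaths : Packs G ({p₃, x, p₁} ∪ {p₂, y, q}) 2 := by
    refine (packs_one ((hx p₃).2 (.inr (.inr rfl))).symm ((hx p₁).2 (.inl rfl)) h₁₃.symm).union
      (packs_one hp₂y hyq hqp₂.symm) ?_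
    simp only [disjoint_insert_left, disjoint_singleton_left, mem_insert, mem_singleton]
    grind
  refine hG.packingBound_of_closedNbhd (N := ({p₃, x, p₁} ∪ {p₂, y, q}) ∪ {y₃, r}) hpaths
    two_ne_zero ?_ ?_
  · intro v _ hv
    simp only [mem_union, mem_insert, mem_singleton] at hv ⊢
    grind
  · have h₁ := card_union_le ({p₃, x, p₁} ∪ {p₂, y, q}) {y₃, r}
    have h₂ := card_union_le {p₃, x, p₁} {p₂, y, q}
    have h₃ : #{p₃, x, p₁} ≤ 3 := card_le_three
    have h₄ : #{p₂, y, q} ≤ 3 := card_le_three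
    have h₅ : #{y₃, r} ≤ 2 := card_le_two
    omega

/-- The component absorbs `p₁` and contributes two paths; the third one is `p₂ x p₃`. -/
theorem packingBound_of_outer_mem (h : IsSubdividedClaw G x p₁ p₂ p₃ y₁ y₂ y₃)
    (hG : HereditarilyBounded G) (hC : IsFiveComponent (isolate G {x, p₁, p₂, p₃}) C)
    (hy₁ : y₁ ∈ C) : PackingBound G ∅ := by
  have hCW {v : V} (hv : v ∈ C) : v ∉ ({x, p₁, p₂, p₃} : Finset V) := hC.notMem_of_isolate hv
  have hclosed {v w : V} (hv : v ∈ C) (hvw : G.Adj v w) :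
      w ∈ C ∨ w ∈ ({x, p₁, p₂, p₃} : Finset V) := hC.mem_or_mem_of_adj hv hvw
  obtain ⟨hx, h₁, h₂, h₃, h₁₂, h₁₃, h₂₃, -, -, -, -⟩ := h
  simp only [mem_insert, mem_singleton, not_or] at hCW hclosed
  have hp₁ : G.Adj p₁ y₁ := (h₁ y₁).2 (.inr rfl)
  have hxp : G.Adj x p₁ ∧ G.Adj x p₂ ∧ G.Adj x p₃ := by grind
  have hpaths : Packs G (insert p₁ C ∪ {p₂, x, p₃}) 3 := by
    refine (hC.packs_two (isolate_le G _) hy₁ hp₁.symm (fun h ↦ (hCW h).2.1 rfl)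
      (hG.degree_le _)).union (packs_one hxp.2.1.symm hxp.2.2 h₂₃) ?_
    have := hxp.1.ne
    simp only [disjoint_insert_right, disjoint_singleton_right]
    grind
  refine hG.packingBound_of_closedNbhd (N := C ∪ {x, p₁, p₂, p₃} ∪ {y₂, y₃}) hpaths
    three_ne_zero ?_ ?_
  · intro v _ hv
    simp only [mem_union, mem_insert, mem_singleton] at hv ⊢
    grind
  · have h₁ := card_union_le (C ∪ {x, p₁, p₂, p₃}) {y₂, y₃}
    have h₂ := card_union_le C {x, p₁, p₂, p₃}
    have h₃ : #{x, p₁, p₂, p₃} ≤ 4 := card_le_four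
    have h₄ : #{y₂, y₃} ≤ 2 := card_le_two
    have h₅ := hC.card_eq
    omega

theorem packingBound_of_outer_ne (h : IsSubdividedClaw G x p₁ p₂ p₃ y₁ y₂ y₃)
    (hG : HereditarilyBounded G) (hy₁₂ : y₁ ≠ y₂) (hy₁₃ : y₁ ≠ y₃) (hy₂₃ : y₂ ≠ y₃) :
    PackingBound G ∅ := by
  have hpath : Packs G {x, p₁, p₂, p₃} 1 :=
    (packs_one ((h.adj₁ x).2 (.inl rfl)) ((h.adj_center p₂).2 (.inr (.inl rfl))) h.ne₁₂).mono le_rfl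
      (by grind)
  have hadj {v w : V} (hv : v ∉ ({x, p₁, p₂, p₃} : Finset V))
      (hw : w ∈ ({x, p₁, p₂, p₃} : Finset V)) (hvw : G.Adj v w) :
      v = y₁ ∧ w = p₁ ∨ v = y₂ ∧ w = p₂ ∨ v = y₃ ∧ w = p₃ := by
    obtain ⟨hx, h₁, h₂, h₃⟩ := h
    simp only [mem_insert, mem_singleton] at hv hw
    grind [SimpleGraph.adj_comm]
  by_cases hits : HitsFive (isolate G {x, p₁, p₂, p₃}) ∅
  · refine packingBound_of_isolate hG.bound_of_lt hpath one_ne_zero hits ?_ ?_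
    · intro v hv
      simp only [mem_sdiff, mem_interior, not_le] at hv
      obtain ⟨⟨hdeg, hlt⟩, hvW⟩ := hv
      obtain ⟨w, hw, hvw⟩ := exists_adj_mem_of_degree_isolate_lt hvW (hlt.trans_le hdeg)
      have hvw := hadj hvW hw hvw
      have := degree_le_degree_isolate_add_one (z := w) hvW fun u hu hvu ↦ by
        have hvu := hadj hvW hu hvu
        grind
      have := h.degree_outer
      grind
    · have h₁ := card_le_card (inter_subset_right (s₁ := interior G) (s₂ := {x, p₁, p₂, p₃}))
      have h₂ : #{x, p₁, p₂, p₃} ≤ 4 := card_le_four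
      rw [card_empty]
      omega
  · obtain ⟨C, hC, -⟩ := exists_disjoint_isFiveComponent hits
    obtain ⟨v, hv, w, hw, hvw⟩ := exists_adj_mem_of_isFiveComponent_isolate
      hG.not_isFiveComponent hC
    rcases hadj (hC.notMem_of_isolate hv) hw hvw with ⟨rfl, -⟩ | ⟨rfl, -⟩ | ⟨rfl, -⟩
    · exact h.packingBound_of_outer_mem hG hC hv
    · refine h.rotate.packingBound_of_outer_mem hG ?_ hv
      convert hC using 2
      grind
    · refine h.rotate.rotate.packingBound_of_outer_mem hG ?_ hv
      convert hC using 2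
      grind

theorem packingBound (h : IsSubdividedClaw G x p₁ p₂ p₃ y₁ y₂ y₃) (hG : HereditarilyBounded G) :
    PackingBound G ∅ := by
  by_cases hy₁₂ : y₁ = y₂
  · subst hy₁₂
    by_cases hy₁₃ : y₁ = y₃
    · subst hy₁₃
      exact absurd h.isFiveComponent (hG.not_isFiveComponent _)
    · exact h.packingBound_of_outer_eq hG hy₁₃
  by_cases hy₂₃ : y₂ = y₃
  · subst hy₂₃
    exact h.rotate.packingBound_of_outer_eq hG (Ne.symm hy₁₂)
  by_cases hy₁₃ : y₁ = y₃
  · subst hy₁₃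
    exact h.rotate.rotate.packingBound_of_outer_eq hG hy₁₂
  · exact h.packingBound_of_outer_ne hG hy₁₂ hy₁₃ hy₂₃

end IsSubdividedClaw

theorem HereditarilyBounded.packingBound_of_degree_eq_three {x : V} (hG : HereditarilyBounded G)
    (hx : G.degree x = 3)
    (hfar : ∀ p, G.Adj x p → G.degree p = 2 ∧ ∀ q, G.Adj p q → G.degree q = 3) :
    PackingBound G ∅ := by
  obtain ⟨p₁, hp₁⟩ := (G.degree_pos_iff_exists_adj x).1 (by omega)
  obtain ⟨p₂, hp₂, h₂₁⟩ := exists_adj_ne_of_two_le_degree (by omega : 2 ≤ G.degree x) p₁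
  obtain ⟨p₃, h₃₁, h₃₂, hxadj⟩ := exists_adj_iff_of_degree_eq_three hx hp₁ hp₂ h₂₁.symm
  have hp₃ : G.Adj x p₃ := (hxadj p₃).2 (.inr (.inr rfl))
  have houter {p : V} (hp : G.Adj x p) :
      ∃ y, y ≠ x ∧ G.degree y = 3 ∧ ∀ w, G.Adj p w ↔ w = x ∨ w = y := by
    obtain ⟨y, hyx, hadj⟩ := exists_adj_iff_of_degree_eq_two (hfar p hp).1 hp.symm
    exact ⟨y, hyx, (hfar p hp).2 y ((hadj y).2 (.inr rfl)), hadj⟩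
  obtain ⟨y₁, hy₁x, hy₁, hadj₁⟩ := houter hp₁
  obtain ⟨y₂, hy₂x, hy₂, hadj₂⟩ := houter hp₂
  obtain ⟨y₃, hy₃x, hy₃, hadj₃⟩ := houter hp₃
  exact IsSubdividedClaw.packingBound
    ⟨hxadj, hadj₁, hadj₂, hadj₃, h₂₁.symm, h₃₁.symm, h₃₂.symm, ⟨hy₁x, hy₂x, hy₃x⟩, hx,
      ⟨(hfar p₁ hp₁).1, (hfar p₂ hp₂).1, (hfar p₃ hp₃).1⟩, ⟨hy₁, hy₂, hy₃⟩⟩ hG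

/-! ### One path around each vertex of degree three -/

theorem exists_injective_adj {d : ℕ} {M : Finset V} (hd : 0 < d) (hM : ∀ m ∈ M, d ≤ G.degree m)
    (hN : ∀ m ∈ M, ∀ x, G.Adj m x → #{p ∈ M | G.Adj p x} ≤ d) :
    ∃ f : M → V, Function.Injective f ∧ ∀ m : M, G.Adj m (f m) := by
  suffices hall : ∀ S : Finset M, #S ≤ #(S.biUnion fun m ↦ G.neighborFinset m) by
    simpa using
      (all_card_le_biUnion_card_iff_exists_injective fun m : M ↦ G.neighborFinset m).1 hall
  intro S
  refine Nat.le_of_mul_le_mul_right (card_mul_le_card_mul (fun m : M ↦ G.Adj m) ?_ ?_) hd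
  · intro m hm
    refine (hM m m.2).trans (card_le_card fun x hx ↦ ?_)
    exact mem_filter.2 ⟨mem_biUnion.2 ⟨m, hm, hx⟩, (G.mem_neighborFinset _ _).1 hx⟩
  · intro x hx
    obtain ⟨m, -, hmx⟩ := mem_biUnion.1 hx
    refine le_trans ?_ (hN m m.2 x ((G.mem_neighborFinset _ _).1 hmx))
    refine card_le_card_of_injOn (fun p : M ↦ (p : V)) (fun p hp ↦ ?_) Subtype.val_injective.injOn
    exact mem_coe.2 (mem_filter.2 ⟨p.2, (mem_filter.1 hp).2⟩)

theorem packs_one_insert_of_two_le_card {x : V} {T : Finset V} (hT : T ⊆ G.neighborFinset x)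
    (hcard : 2 ≤ #T) : Packs G (insert x T) 1 := by
  obtain ⟨a, ha, b, hb, hab⟩ := one_lt_card.1 hcard
  have hxa := (G.mem_neighborFinset x a).1 (hT ha)
  have hxb := (G.mem_neighborFinset x b).1 (hT hb)
  exact (packs_one hxa.symm hxb hab).mono le_rfl (by grind)

section Cubic

variable {A M : Finset V}

/-- Withholding each `m` from its neighbour `f m` costs every vertex of `A` at most one neighbour
and makes the remaining neighbourhoods disjoint. -/
theorem packs_card_of_injective {f : M → V} (hf : Function.Injective f)
    (hdeg : ∀ x ∈ A, 3 ≤ G.degree x) (hindep : ∀ x ∈ A, ∀ p, G.Adj x p → p ∉ A)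
    (hcommon : ∀ x ∈ A, ∀ y ∈ A, x ≠ y → ∀ p, G.Adj x p → G.Adj y p →
      ∃ m : M, (m : V) = p ∧ (f m = x ∨ f m = y)) :
    Packs G univ #A := by
  let withheld (x : V) : Finset V := (univ.filter fun m : M ↦ f m = x).image (↑)
  have hwithheld (x : V) : #(withheld x) ≤ 1 :=
    card_image_le.trans (card_le_one.2 fun m hm n hn ↦
      hf ((mem_filter.1 hm).2.trans (mem_filter.1 hn).2.symm))
  refine (packs_biUnion (T := fun x ↦ insert x (G.neighborFinset x \ withheld x))
    (fun x hx ↦ packs_one_insert_of_two_le_card sdiff_subset ?_) ?_).mono le_rfl (subset_univ _)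
  · have h₁ := le_card_sdiff (withheld x) (G.neighborFinset x)
    have h₂ := hwithheld x
    have h₃ := hdeg x hx
    rw [G.card_neighborFinset_eq_degree] at h₁
    omega
  · intro x hx y hy hxy
    refine disjoint_left.2 fun p hpx hpy ↦ ?_
    simp only [withheld, mem_insert, mem_sdiff, SimpleGraph.mem_neighborFinset, mem_image,
      mem_filter, mem_univ, true_and, not_exists, not_and] at hpx hpy
    rcases hpx with rfl | ⟨hxp, hpx⟩
    · exact hpy.elim hxy fun h ↦ hindep y hy p h.1 hx
    rcases hpy with rfl | ⟨hyp, hpy⟩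
    · exact hindep x hx p hxp hy
    obtain ⟨m, hmp, hm | hm⟩ := hcommon x hx y hy hxy p hxp hyp
    exacts [hpx m hm hmp, hpy m hm hmp]

theorem card_filter_adj_lt_degree {x p : V} (hxp : G.Adj x p) (hpM : p ∉ M) :
    #{m ∈ M | G.Adj m x} < G.degree x := by
  refine card_lt_card ((ssubset_iff_of_subset fun m hm ↦ ?_).2
    ⟨p, (G.mem_neighborFinset x p).2 hxp, fun hp ↦ hpM (mem_filter.1 hp).1⟩)
  exact (G.mem_neighborFinset x m).2 (mem_filter.1 hm).2.symm

theorem packs_card_degree_eq_three (hA : ∀ x, x ∈ A ↔ G.degree x = 3)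
    (hnbr : ∀ x ∈ A, ∀ p, G.Adj x p → G.degree p = 2)
    (hnear : ∀ x ∈ A, ∃ p, G.Adj x p ∧ ∃ q, G.Adj p q ∧ G.degree q ≠ 3) :
    Packs G univ #A := by
  obtain ⟨M, hM⟩ : ∃ M : Finset V, ∀ m, m ∈ M ↔ G.degree m = 2 ∧ ∀ x, G.Adj m x → x ∈ A :=
    ⟨univ.filter fun m ↦ G.degree m = 2 ∧ ∀ x, G.Adj m x → x ∈ A, by simp⟩
  have hshared (x : V) (hx : x ∈ A) : #{m ∈ M | G.Adj m x} ≤ 2 := by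
    obtain ⟨p, hxp, q, hpq, hq⟩ := hnear x hx
    have hlt := card_filter_adj_lt_degree hxp fun hp ↦ hq ((hA q).1 (((hM p).1 hp).2 q hpq))
    rw [(hA x).1 hx] at hlt
    exact Nat.le_of_lt_succ hlt
  obtain ⟨f, hf, hfadj⟩ := exists_injective_adj two_pos (fun m hm ↦ ((hM m).1 hm).1.ge)
    fun m hm x hmx ↦ hshared x (((hM m).1 hm).2 x hmx)
  refine packs_card_of_injective hf (fun x hx ↦ ((hA x).1 hx).ge) ?_ ?_
  · intro x hx p hxp hp
    have := hnbr x hx p hxp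
    have := (hA p).1 hp
    omega
  · intro x hx y hy hxy p hxp hyp
    have hp := hnbr x hx p hxp
    obtain ⟨z, -, hpadj⟩ := exists_adj_iff_of_degree_eq_two hp hxp.symm
    obtain rfl : y = z := ((hpadj y).1 hyp.symm).resolve_left hxy.symm
    have hpM : p ∈ M := by
      refine (hM p).2 ⟨hp, fun w hw ↦ ?_⟩
      rcases (hpadj w).1 hw with rfl | rfl <;> assumption
    exact ⟨⟨p, hpM⟩, rfl, (hpadj _).1 (hfadj ⟨p, hpM⟩)⟩

theorem packingBound_of_adj_degree_eq_three (hdeg : ∀ v, G.degree v ≤ 3)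
    (hnbr : ∀ x, G.degree x = 3 → ∀ p, G.Adj x p → G.degree p = 2)
    (hcover : ∀ p, G.degree p = 2 → ∃ x, G.Adj p x ∧ G.degree x = 3)
    (hnear : ∀ x, G.degree x = 3 → ∃ p, G.Adj x p ∧ ∃ q, G.Adj p q ∧ G.degree q ≠ 3) :
    PackingBound G ∅ := by
  obtain ⟨A, hA⟩ : ∃ A : Finset V, ∀ x, x ∈ A ↔ G.degree x = 3 :=
    ⟨univ.filter fun x ↦ G.degree x = 3, by simp⟩
  refine ⟨#A, packs_card_degree_eq_three hA (fun x hx ↦ hnbr x ((hA x).1 hx))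
    fun x hx ↦ hnear x ((hA x).1 hx), ?_⟩
  have hsub : interior G ⊆ A.biUnion fun x ↦ insert x (G.neighborFinset x) := by
    intro v hv
    rw [mem_interior] at hv
    rw [mem_biUnion]
    obtain hv | hv : G.degree v = 2 ∨ G.degree v = 3 := by have := hdeg v; omega
    · obtain ⟨x, hvx, hx⟩ := hcover v hv
      exact ⟨x, (hA x).2 hx, mem_insert_of_mem ((G.mem_neighborFinset x v).2 hvx.symm)⟩
    · exact ⟨v, (hA v).2 hv, mem_insert_self _ _⟩
  have hcard : #(A.biUnion fun x ↦ insert x (G.neighborFinset x)) ≤ #A * 4 := by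
    refine card_biUnion_le_card_mul _ _ _ fun x _ ↦ (card_insert_le _ _).trans ?_
    rw [G.card_neighborFinset_eq_degree]
    exact Nat.succ_le_succ (hdeg x)
  have := card_le_card hsub
  rw [card_empty]
  omega

end Cubic

/-! ### The induction -/

theorem PackingBound.mono (h : PackingBound G Y) (hYZ : #Y ≤ #Z) : PackingBound G Z :=
  let ⟨k, hk, hbound⟩ := h
  ⟨k, hk, by omega⟩

theorem IsFiveComponent.packs_one (hC : IsFiveComponent G C) : Packs G C 1 := by
  obtain ⟨v, hv⟩ : C.Nonempty := card_pos.1 (by simp [hC.card_eq])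
  refine (packs_one_insert_of_two_le_card subset_rfl (hC.two_le_degree v hv)).mono le_rfl ?_
  refine insert_subset hv fun w hw ↦ hC.mem_of_adj v hv w ?_
  exact (G.mem_neighborFinset v w).1 hw

theorem packingBound_of_isFiveComponent (hC : IsFiveComponent G C) (hY : HitsFive G Y)
    (ih : ∀ G' < G, ∀ Y, HitsFive G' Y → PackingBound G' Y) : PackingBound G Y := by
  obtain ⟨y, hy⟩ := hY C hC
  obtain ⟨hyC, hyY⟩ := mem_inter.1 hy
  have hdeg {v : V} (hv : v ∉ C) : G.degree v ≤ (isolate G C).degree v := by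
    by_contra! hlt
    obtain ⟨w, hw, hvw⟩ := exists_adj_mem_of_degree_isolate_lt hv hlt
    exact hv (hC.mem_of_adj w hw v hvw.symm)
  refine packingBound_of_isolate (Y := Y.erase y) ih hC.packs_one one_ne_zero ?_ ?_ ?_
  · intro D hD
    have hDC (v : V) (hv : v ∈ D) : v ∉ C := hD.notMem_of_isolate hv
    have hDG : IsFiveComponent G D := by
      refine ⟨hD.card_eq, fun v hv ↦ ?_, fun v hv w hvw ↦ ?_⟩
      · exact (hD.two_le_degree v hv).trans (SimpleGraph.degree_le_of_le (isolate_le G C))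
      · refine hD.mem_of_adj v hv w ⟨hvw, hDC v hv, fun hw ↦ ?_⟩
        exact hDC v hv (hC.mem_of_adj w hw v hvw.symm)
    obtain ⟨z, hz⟩ := hY D hDG
    obtain ⟨hzD, hzY⟩ := mem_inter.1 hz
    exact ⟨z, mem_inter.2 ⟨hzD, mem_erase.2 ⟨fun h ↦ hDC z hzD (h ▸ hyC), hzY⟩⟩⟩
  · intro v hv
    simp only [mem_sdiff, mem_interior, not_le] at hv
    have := hdeg hv.2
    omega
  · have h₁ := card_le_card (inter_subset_right (s₁ := interior G) (s₂ := C))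
    have h₂ := card_erase_add_one hyY
    have h₃ := hC.card_eq
    omega

theorem HereditarilyBounded.packingBound (hG : HereditarilyBounded G) : PackingBound G ∅ := by
  by_contra hbad
  have hdeg {v w : V} (hvw : G.Adj v w) : G.degree v = 2 ∨ G.degree v = 3 :=
    (hG.packingBound_or_degree_eq hvw).resolve_left hbad
  have hnbr (x : V) (hx : G.degree x = 3) (p : V) (hxp : G.Adj x p) : G.degree p = 2 := by
    by_contra hp
    exact hbad (hG.packingBound_of_adj_of_degree_ne_two hxp (by omega) hp)
  refine hbad (packingBound_of_adj_degree_eq_three hG.degree_le hnbr ?_ ?_)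
  · intro p hp
    by_contra! hfar
    obtain ⟨a, hpa⟩ := (G.degree_pos_iff_exists_adj p).1 (by omega)
    obtain ⟨b, hpb, hba⟩ := exists_adj_ne_of_two_le_degree hp.ge a
    exact hbad (hG.packingBound_of_run hpa.symm hpb hba.symm
      ((hdeg hpa.symm).resolve_right (hfar a hpa)) hp ((hdeg hpb.symm).resolve_right (hfar b hpb)))
  · intro x hx
    by_contra! hfar
    exact hbad (hG.packingBound_of_degree_eq_three hx fun p hxp ↦ ⟨hnbr x hx p hxp, hfar p hxp⟩)

theorem packingBound_of_hitsFive (hdeg : ∀ v, G.degree v ≤ 3) (hY : HitsFive G Y) :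
    PackingBound G Y := by
  induction G using WellFoundedLT.induction generalizing Y with
  | ind G ih =>
    have hbound (G') (hlt : G' < G) (Y) (hY : HitsFive G' Y) : PackingBound G' Y :=
      ih G' hlt (fun v ↦ (SimpleGraph.degree_le_of_le hlt.le).trans (hdeg v)) hY
    by_cases hfive : ∃ C, IsFiveComponent G C
    · obtain ⟨C, hC⟩ := hfive
      exact packingBound_of_isFiveComponent hC hY hbound
    · have hG : HereditarilyBounded G := ⟨hdeg, not_exists.1 hfive, hbound⟩
      exact hG.packingBound.mono (by simp)

/-! ### Comparison with connected components -/

theorem IsFiveComponent.mem_of_reachable (hC : IsFiveComponent G C) {v w : V} (hv : v ∈ C)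
    (hvw : G.Reachable v w) : w ∈ C := by
  obtain ⟨p⟩ := hvw
  induction p with
  | nil => exact hv
  | cons huv _ ih => exact ih (hC.mem_of_adj _ hv _ huv)

/-- Two closed neighbourhoods, of at least three vertices each, intersect inside `C`. -/
theorem IsFiveComponent.reachable (hC : IsFiveComponent G C) {v w : V} (hv : v ∈ C) (hw : w ∈ C) :
    G.Reachable v w := by
  have hsub {u : V} (hu : u ∈ C) : insert u (G.neighborFinset u) ⊆ C :=
    insert_subset hu fun _ h ↦ hC.mem_of_adj u hu _ ((G.mem_neighborFinset _ _).1 h)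
  have hcard {u : V} (hu : u ∈ C) : 3 ≤ #(insert u (G.neighborFinset u)) := by
    rw [card_insert_of_notMem (by simp), G.card_neighborFinset_eq_degree]
    exact Nat.succ_le_succ (hC.two_le_degree u hu)
  have hreach {u a : V} (ha : a ∈ insert u (G.neighborFinset u)) : G.Reachable u a := by
    rcases mem_insert.1 ha with rfl | ha
    · exact .rfl
    · exact ((G.mem_neighborFinset _ _).1 ha).reachable
  obtain ⟨a, ha⟩ := inter_nonempty_of_card_lt_card_add_card (hsub hv) (hsub hw)
    (by have := hC.card_eq; have := hcard hv; have := hcard hw; omega)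
  exact (hreach (mem_inter.1 ha).1).trans (hreach (mem_inter.1 ha).2).symm

theorem IsFiveComponent.supp_connectedComponentMk (hC : IsFiveComponent G C) {v : V} (hv : v ∈ C) :
    (G.connectedComponentMk v).supp = C := by
  ext w
  rw [SimpleGraph.ConnectedComponent.mem_supp_iff, SimpleGraph.ConnectedComponent.eq]
  exact ⟨fun h ↦ hC.mem_of_reachable hv h.symm, fun hw ↦ hC.reachable hw hv⟩

theorem exists_hitsFive_card_le (G : SimpleGraph V) :
    ∃ Y, HitsFive G Y ∧ #Y ≤ {c : G.ConnectedComponent | c.supp.ncard = 5}.ncard := by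
  choose repr hrepr using fun c : G.ConnectedComponent ↦ c.nonempty_supp
  refine ⟨{c : G.ConnectedComponent | c.supp.ncard = 5}.toFinset.image repr, fun C hC ↦ ?_, ?_⟩
  · obtain ⟨v, hv⟩ : C.Nonempty := card_pos.1 (by simp [hC.card_eq])
    have hsupp := hC.supp_connectedComponentMk hv
    refine ⟨repr (G.connectedComponentMk v), mem_inter.2 ⟨?_, mem_image_of_mem _ ?_⟩⟩
    · rw [← mem_coe, ← hsupp]
      exact hrepr _
    · rw [Set.mem_toFinset, Set.mem_ofPred_eq, hsupp, Set.ncard_coe_finset, hC.card_eq]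
  · rw [Set.ncard_eq_toFinset_card']
    exact card_image_le

end PathPacking

theorem stmt_0_general {V : Type*} [Fintype V] (G : SimpleGraph V) [DecidableRel G.Adj]
    (hdeg : ∀ v, G.degree v ≤ 3) :
    Finset.card {v | 2 ≤ G.degree v} ≤
      4 * G.lambdaK 2 + {c : G.ConnectedComponent | c.supp.ncard = 5}.ncard := by
  obtain ⟨Y, hY, hYcard⟩ := PathPacking.exists_hitsFive_card_le G
  obtain ⟨k, hk, hbound⟩ := PathPacking.packingBound_of_hitsFive (by convert hdeg) hY
  have hinterior : (Finset.univ.filter fun v ↦ 2 ≤ G.degree v) = PathPacking.interior G := by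
    ext v
    rw [PathPacking.mem_interior, Finset.mem_filter_univ]
    convert Iff.rfl
  rw [hinterior]
  have := hk.le_lambdaK
  omega

/-- Let `G` be a finite simple graph in which every vertex has degree 2 or 3, and
suppose `G` has no connected component with exactly 5 vertices.
Then `λ(G) ≥ v(G)/4`. -/
theorem stmt_0 {V : Type} [Fintype V] (G : SimpleGraph V) [DecidableRel G.Adj]
    (hdeg : ∀ v : V, G.degree v = 2 ∨ G.degree v = 3)
    (hcomp : ∀ c : G.ConnectedComponent, c.supp.ncard ≠ 5) :
    (G.lambdaK 2 : ℚ) ≥ (Fintype.card V : ℚ) / 4 := by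
  have hbound := stmt_0_general G fun v ↦ by have := hdeg v; omega
  have hall : ∀ v, 2 ≤ G.degree v := fun v ↦ by have := hdeg v; omega
  simp only [hall, hcomp, Finset.filter_true, Finset.card_univ, Set.ofPred_false, Set.ncard_empty,
    add_zero] at hbound
  rw [ge_iff_le, div_le_iff₀' four_pos]
  exact_mod_cast hbound
end

section
/- Let s ≥ 4 be an integer and let G be a finite simple graph in which every vertex has degree at least 2 and at most s. Then λ(G) ≥ v(G)/(s+1). -/
/-!
Two reductions simplify `G`. An edge joining two vertices of degree at least `3` is deleted. If a
vertex of degree `2` has only neighbours of degree `2`, then it is the middle of a path whose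
inner vertices have no neighbours off the path and whose ends have at most one. Whenever deleting
such a path leaves a vertex with fewer than two neighbours, that vertex extends the path at one of
its ends; so the path can be grown until its deletion preserves minimum degree `2`. As it has
`n ≥ 3` vertices, cutting it up gives `⌊n / 3⌋ ≥ n / 5` disjoint `2`-edge paths.

When neither reduction applies, call a vertex big if its degree is at least `3`: the big vertices
are independent and every other non-isolated vertex is adjacent to one of them. Let every small
vertex split two units equally among its big neighbours, so that a big vertex of degree `d` collects
between `d` and `2 * d` units. If `b` big vertices exist and `t` of them collect exactly `3`, then a
deficiency version of Hall's theorem gives two private neighbours to at least `b - t / 2` big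
vertices, each of which is then the centre of a `2`-edge path. Counting a big vertex together with
half of the units it collects, it stands for at most `s + 1` vertices, and for at most
`3 / 2 + 1 ≤ (s + 1) / 2` if it collects `3`; hence there are at most `(s + 1) * (b - t / 2)`
vertices.
-/

open Finset

section SetFamily

variable {ι α : Type*} [DecidableEq α]

theorem sum_sum_eq_sum_biUnion_card_mul (t : ι → Finset α) (c : α → ℕ) (S : Finset ι) :
    ∑ i ∈ S, ∑ a ∈ t i, c a = ∑ a ∈ S.biUnion t, #{i ∈ S | a ∈ t i} * c a := by
  rw [sum_comm' (t' := S.biUnion t) (s' := fun a ↦ {i ∈ S | a ∈ t i}) (by grind)]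
  simp only [sum_const, smul_eq_mul]

variable [Fintype ι]

-- Hall's theorem after adjoining `d` dummy elements to every set of the family.
theorem exists_injective_of_card_le_card_biUnion_add (t : ι → Finset α) (d : ℕ)
    (ht : ∀ S : Finset ι, #S ≤ #(S.biUnion t) + d) :
    ∃ S : Finset ι, Fintype.card ι ≤ #S + d ∧
      ∃ f : S → α, Function.Injective f ∧ ∀ i : S, f i ∈ t i := by
  classical
  let padded : ι → Finset (α ⊕ ℕ) := fun i ↦ (t i).disjSum (range d)
  have hall (S : Finset ι) : #S ≤ #(S.biUnion padded) := by
    obtain rfl | ⟨i₀, hi₀⟩ := S.eq_empty_or_nonempty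
    · simp
    calc
      #S ≤ #(S.biUnion t) + d := ht S
      _ = #((S.biUnion t).disjSum (range d)) := by rw [card_disjSum, card_range]
      _ ≤ #(S.biUnion padded) := card_le_card fun x hx ↦ by
        rcases x with a | n
        · simpa [padded] using hx
        · exact mem_biUnion.2 ⟨i₀, hi₀, by simpa [padded] using hx⟩
  obtain ⟨m, m_inj, m_mem⟩ := (all_card_le_biUnion_card_iff_exists_injective padded).1 hall
  let matched : Finset ι := {i | (m i).isLeft}
  have card_compl_matched : #matchedᶜ ≤ d := by
    calc
      #matchedᶜ ≤ #((range d).map .inr : Finset (α ⊕ ℕ)) :=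
        card_le_card_of_injOn m (fun i hi ↦ by
          have := m_mem i
          cases h : m i <;> simp_all [matched, padded]) m_inj.injOn
      _ = d := by rw [card_map, card_range]
  have exists_value (i : matched) : ∃ a ∈ t i, m i = .inl a := by
    obtain ⟨a, ha⟩ := Sum.isLeft_iff.1 (mem_filter.1 i.2).2
    exact ⟨a, by simpa [padded, ha] using m_mem i, ha⟩
  choose f f_mem hf using exists_value
  refine ⟨matched, ?_, f, fun i j hij ↦ ?_, f_mem⟩
  · rw [card_compl] at card_compl_matched
    omega
  · exact Subtype.ext (m_inj (by rw [hf, hf, hij]))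

theorem exists_injective_prod_of_card_mul_le_card_biUnion_add {κ : Type*} [Fintype κ]
    (t : ι → Finset α) (d : ℕ)
    (ht : ∀ S : Finset ι, Fintype.card κ * #S ≤ #(S.biUnion t) + d) :
    ∃ S : Finset ι, Fintype.card ι ≤ #S + d ∧
      ∃ f : S × κ → α, Function.Injective f ∧ ∀ p, f p ∈ t p.1 := by
  classical
  have hall (U : Finset (ι × κ)) : #U ≤ #(U.biUnion fun p ↦ t p.1) + d := by
    calc
      #U ≤ #(U.image Prod.fst ×ˢ univ) := card_le_card fun p hp ↦ by
        simpa using ⟨p.2, hp⟩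
      _ = Fintype.card κ * #(U.image Prod.fst) := by rw [card_product, card_univ, mul_comm]
      _ ≤ #((U.image Prod.fst).biUnion t) + d := ht _
      _ = #(U.biUnion fun p ↦ t p.1) + d := by rw [image_biUnion]
  obtain ⟨U, card_U, f, f_inj, f_mem⟩ := exists_injective_of_card_le_card_biUnion_add _ d hall
  let full : Finset ι := {i | ∀ k, (i, k) ∈ U}
  have card_compl_full : #fullᶜ ≤ #Uᶜ := by
    calc
      #fullᶜ ≤ #(Uᶜ.image Prod.fst) := card_le_card fun i hi ↦ by simpa [full] using hi
      _ ≤ #Uᶜ := card_image_le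
  have mem_U (p : full × κ) : ((p.1 : ι), p.2) ∈ U := (mem_filter_univ _).1 p.1.2 p.2
  refine ⟨full, ?_, fun p ↦ f ⟨_, mem_U p⟩, fun p q hpq ↦ ?_, fun p ↦ f_mem _⟩
  · rw [card_compl, card_compl] at card_compl_full
    have := card_le_univ full
    omega
  · have := f_inj hpq
    simp only [Subtype.mk.injEq, Prod.mk.injEq, SetLike.coe_eq_coe] at this
    exact Prod.ext this.1 this.2

/-- What the set `t i` receives when every element `a` splits `m` units equally among the sets of
the family `t` containing it. Floor division loses nothing when the number of these sets divides
`m`. -/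
def share (m : ℕ) (t : ι → Finset α) (i : ι) : ℕ :=
  ∑ a ∈ t i, m / #{j | a ∈ t j}

theorem share_le (m : ℕ) (t : ι → Finset α) (i : ι) : share m t i ≤ m * #(t i) := by
  calc
    share m t i ≤ ∑ _a ∈ t i, m := sum_le_sum fun a _ ↦ Nat.div_le_self _ _
    _ = m * #(t i) := by rw [sum_const, smul_eq_mul, mul_comm]

theorem card_le_share {m : ℕ} {t : ι → Finset α} (ht : ∀ a, #{j | a ∈ t j} ≤ m) (i : ι) :
    #(t i) ≤ share m t i := by
  rw [card_eq_sum_ones]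
  refine sum_le_sum fun a ha ↦ (Nat.one_le_div_iff ?_).2 (ht a)
  exact card_pos.2 ⟨i, by simpa using ha⟩

theorem sum_share_le (m : ℕ) (t : ι → Finset α) (S : Finset ι) :
    ∑ i ∈ S, share m t i ≤ m * #(S.biUnion t) := by
  simp only [share]
  rw [sum_sum_eq_sum_biUnion_card_mul, mul_comm, ← smul_eq_mul]
  refine sum_le_card_nsmul _ _ _ fun a _ ↦ ?_
  calc
    #{i ∈ S | a ∈ t i} * (m / #{j | a ∈ t j}) ≤ #{j | a ∈ t j} * (m / #{j | a ∈ t j}) := by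
      gcongr
      exact S.subset_univ
    _ ≤ m := Nat.mul_div_le _ _

theorem sum_share_eq {m : ℕ} {t : ι → Finset α}
    (ht : ∀ a ∈ univ.biUnion t, #{j | a ∈ t j} ∣ m) :
    ∑ i, share m t i = m * #(univ.biUnion t) := by
  simp only [share]
  rw [sum_sum_eq_sum_biUnion_card_mul, sum_congr rfl fun a ha ↦ Nat.mul_div_cancel' (ht a ha),
    sum_const, smul_eq_mul, mul_comm]

theorem exists_disjoint_pairs_of_three_le_share {t : ι → Finset α}
    (ht : ∀ i, 3 ≤ share 2 t i) :
    ∃ S : Finset ι, 2 * Fintype.card ι ≤ 2 * #S + #{i | share 2 t i = 3} ∧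
      ∃ f : S × Bool → α, Function.Injective f ∧ ∀ p, f p ∈ t p.1 := by
  set tight : Finset ι := {i | share 2 t i = 3}
  have hall (S : Finset ι) : Fintype.card Bool * #S ≤ #(S.biUnion t) + #tight / 2 := by
    have : 4 * #S ≤ 2 * #(S.biUnion t) + #tight := by
      calc
        4 * #S = ∑ i ∈ S, 4 := by rw [sum_const, smul_eq_mul, mul_comm]
        _ ≤ ∑ i ∈ S, (share 2 t i + if share 2 t i = 3 then 1 else 0) :=
          sum_le_sum fun i _ ↦ by grind
        _ = ∑ i ∈ S, share 2 t i + #{i ∈ S | share 2 t i = 3} := by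
          rw [sum_add_distrib, card_filter]
        _ ≤ 2 * #(S.biUnion t) + #tight := by
          gcongr
          · exact sum_share_le 2 t S
          · exact filter_subset_filter _ S.subset_univ
    rw [Fintype.card_bool]
    omega
  obtain ⟨S, card_S, hS⟩ := exists_injective_prod_of_card_mul_le_card_biUnion_add t _ hall
  exact ⟨S, by omega, hS⟩

theorem two_mul_card_biUnion_add_card_le {s : ℕ} (hs : 4 ≤ s) {t : ι → Finset α}
    (ht : ∀ a, #{i | a ∈ t i} ≤ 2) (card_le : ∀ i, #(t i) ≤ s) :
    2 * (#(univ.biUnion t) + Fintype.card ι) + (s + 1) * #{i | share 2 t i = 3} ≤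
      2 * ((s + 1) * Fintype.card ι) := by
  have dvd_two : ∀ a ∈ univ.biUnion t, #{i | a ∈ t i} ∣ 2 := by
    intro a ha
    have : 0 < #{i | a ∈ t i} := card_pos.2 (by simpa [Finset.Nonempty] using ha)
    have := ht a
    interval_cases #{i | a ∈ t i} <;> decide
  calc
    2 * (#(univ.biUnion t) + Fintype.card ι) + (s + 1) * #{i | share 2 t i = 3}
      = ∑ i, (share 2 t i + 2 + (s + 1) * if share 2 t i = 3 then 1 else 0) := by
        rw [sum_add_distrib, sum_add_distrib, sum_share_eq dvd_two, ← mul_sum, ← card_filter,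
          sum_const, card_univ, smul_eq_mul]
        ring
    _ ≤ ∑ _i : ι, 2 * (s + 1) := sum_le_sum fun i _ ↦ by
        have := share_le 2 t i
        have := card_le i
        split_ifs <;> omega
    _ = 2 * ((s + 1) * Fintype.card ι) := by
        rw [sum_const, card_univ, smul_eq_mul]
        ring

theorem exists_disjoint_pairs_card_biUnion_add_card_le {s : ℕ} (hs : 4 ≤ s) {t : ι → Finset α}
    (ht : ∀ a, #{i | a ∈ t i} ≤ 2) (le_card : ∀ i, 3 ≤ #(t i)) (card_le : ∀ i, #(t i) ≤ s) :
    ∃ S : Finset ι, #(univ.biUnion t) + Fintype.card ι ≤ (s + 1) * #S ∧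
      ∃ f : S × Bool → α, Function.Injective f ∧ ∀ p, f p ∈ t p.1 := by
  obtain ⟨S, card_S, hS⟩ := exists_disjoint_pairs_of_three_le_share
    fun i ↦ (le_card i).trans (card_le_share ht i)
  refine ⟨S, ?_, hS⟩
  have := two_mul_card_biUnion_add_card_le hs ht card_le
  nlinarith

end SetFamily

section PathPacking

open SimpleGraph

variable {V : Type*} {G H : SimpleGraph V} {k : ℕ} {L M : List (List V)}

/-- A packing of pairwise vertex-disjoint `k`-edge paths of `G`, each path being encoded by the
list of its `k + 1` vertices in order. -/
structure IsPathPacking (G : SimpleGraph V) (k : ℕ) (L : List (List V)) : Prop where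
  isChain : ∀ p ∈ L, p.IsChain G.Adj
  length_eq : ∀ p ∈ L, p.length = k + 1
  nodup_flatten : L.flatten.Nodup

namespace IsPathPacking

theorem mono (hL : IsPathPacking G k L) (h : G ≤ H) : IsPathPacking H k L where
  isChain p hp := (hL.isChain p hp).imp h
  length_eq := hL.length_eq
  nodup_flatten := hL.nodup_flatten

theorem append (hL : IsPathPacking G k L) (hM : IsPathPacking G k M)
    (h : L.flatten.Disjoint M.flatten) : IsPathPacking G k (L ++ M) where
  isChain p hp := (List.mem_append.1 hp).elim (hL.isChain p) (hM.isChain p)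
  length_eq p hp := (List.mem_append.1 hp).elim (hL.length_eq p) (hM.length_eq p)
  nodup_flatten := by
    rw [List.flatten_append]
    exact hL.nodup_flatten.append hM.nodup_flatten h

theorem mem_support (hL : IsPathPacking G k L) (hk : k ≠ 0) {v : V} (hv : v ∈ L.flatten) :
    v ∈ G.support := by
  obtain ⟨p, hp, hvp⟩ := List.mem_flatten.1 hv
  obtain ⟨i, hi, rfl⟩ := List.getElem_of_mem hvp
  have adj_succ := List.isChain_iff_getElem.1 (hL.isChain p hp)
  have length_p := hL.length_eq p hp
  rcases i with _ | i
  · exact ⟨p[1], adj_succ 0 (by omega)⟩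
  · exact ⟨p[i], (adj_succ i hi).symm⟩

end IsPathPacking

theorem exists_isKEdgePath_of_isChain {p : List V} (hp : p.IsChain G.Adj) (hnodup : p.Nodup)
    (hlength : p.length = k + 1) :
    ∃ H : G.Subgraph, H.IsKEdgePath k ∧ H.verts = {v | v ∈ p} := by
  have hne : p ≠ [] := List.ne_nil_of_length_eq_add_one hlength
  refine ⟨(Walk.ofSupport p hne hp).toSubgraph, ⟨_, _, Walk.ofSupport p hne hp, ?_, ?_, rfl⟩, ?_⟩
  · rwa [Walk.isPath_def, Walk.support_ofSupport]
  · rw [Walk.length_ofSupport, hlength, Nat.add_sub_cancel]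
  · rw [Walk.verts_toSubgraph, Walk.support_ofSupport]

theorem card_le_lambdaK [Finite V] (P : Finset G.Subgraph) (hP : ∀ H ∈ P, H.IsKEdgePath k)
    (disjoint : (P : Set G.Subgraph).Pairwise fun H H' ↦ Disjoint H.verts H'.verts) :
    #P ≤ G.lambdaK k := by
  have := Fintype.ofFinite G.Subgraph
  refine le_csSup ⟨Fintype.card G.Subgraph, ?_⟩ ⟨P, hP, disjoint, rfl⟩
  rintro _ ⟨Q, -, -, rfl⟩
  exact card_le_univ Q

theorem IsPathPacking.length_le_lambdaK [Finite V] (hL : IsPathPacking G k L) :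
    L.length ≤ G.lambdaK k := by
  classical
  obtain ⟨nodup, disjoint⟩ := List.nodup_flatten.1 hL.nodup_flatten
  have exists_subgraph :
      ∀ p ∈ L, ∃ H : G.Subgraph, H.IsKEdgePath k ∧ H.verts = {v | v ∈ p} := fun p hp ↦
    exists_isKEdgePath_of_isChain (hL.isChain p hp) (nodup p hp) (hL.length_eq p hp)
  choose! Φ Φ_path Φ_verts using exists_subgraph
  have pairwise_disjoint : (L.map Φ).Pairwise fun H H' ↦ Disjoint H.verts H'.verts := by
    refine List.pairwise_map.2 (disjoint.imp_of_mem fun {p q} hp hq hpq ↦ ?_)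
    rw [Φ_verts p hp, Φ_verts q hq]
    exact Set.disjoint_left.2 hpq
  have isKEdgePath : ∀ H ∈ L.map Φ, H.IsKEdgePath k := by
    simpa using Φ_path
  have nodup_map : (L.map Φ).Nodup := by
    refine pairwise_disjoint.imp_of_mem fun {H H'} hH _ hHH' heq ↦ ?_
    obtain ⟨u, v, w, -, -, rfl⟩ := isKEdgePath H hH
    subst heq
    exact Set.disjoint_left.1 hHH' w.start_mem_verts_toSubgraph w.start_mem_verts_toSubgraph
  calc
    L.length = #(L.map Φ).toFinset := by
      rw [List.toFinset_card_of_nodup nodup_map, List.length_map]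
    _ ≤ G.lambdaK k := by
      refine card_le_lambdaK _ (by simpa only [List.mem_toFinset] using isKEdgePath) ?_
      exact (List.pairwiseDisjoint_iff_coe_toFinset_pairwise_disjoint nodup_map).2
        pairwise_disjoint

theorem exists_isPathPacking_of_isChain (k : ℕ) (p : List V) (hp : p.IsChain G.Adj)
    (hnodup : p.Nodup) :
    ∃ L, IsPathPacking G k L ∧ L.flatten.Sublist p ∧ L.length = p.length / (k + 1) := by
  by_cases hlength : p.length < k + 1
  · exact ⟨[], ⟨by simp, by simp, by simp⟩, by simp, by simp [Nat.div_eq_of_lt hlength]⟩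
  obtain ⟨L, hL, hsub, hlen⟩ :=
    exists_isPathPacking_of_isChain k (p.drop (k + 1)) (hp.drop _) hnodup.drop
  have hsub' : (p.take (k + 1) :: L).flatten.Sublist p := by
    rw [List.flatten_cons]
    conv_rhs => rw [← List.take_append_drop (k + 1) p]
    exact hsub.append_left _
  refine ⟨p.take (k + 1) :: L, ⟨?_, ?_, hnodup.sublist hsub'⟩, hsub', ?_⟩
  · exact List.forall_mem_cons.2 ⟨hp.take _, hL.isChain⟩
  · exact List.forall_mem_cons.2 ⟨by rw [List.length_take]; omega, hL.length_eq⟩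
  · rw [List.length_cons, hlen, List.length_drop]
    exact (Nat.div_eq_sub_div k.succ_pos (not_lt.1 hlength)).symm
termination_by p.length
decreasing_by
  rw [List.length_drop]
  omega

theorem isPathPacking_two_map_cherry {ι : Type*} {l : List ι} (hl : l.Nodup) {c : ι → V}
    {f : ι × Bool → V} (c_inj : Function.Injective c) (f_inj : Function.Injective f)
    (adj : ∀ p, G.Adj (c p.1) (f p)) (f_ne_c : ∀ p i, f p ≠ c i) :
    IsPathPacking G 2 (l.map fun i ↦ [f (i, false), c i, f (i, true)]) where
  isChain := by
    simpa using fun i _ ↦ ⟨(adj (i, false)).symm, adj (i, true)⟩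
  length_eq := by simp
  nodup_flatten := by
    rw [List.nodup_flatten, List.pairwise_map]
    constructor
    · simp [f_inj.eq_iff, f_ne_c, (f_ne_c _ _).symm]
    · refine hl.imp fun hij ↦ ?_
      simp [List.Disjoint, f_inj.eq_iff, c_inj.eq_iff, f_ne_c, (f_ne_c _ _).symm, hij]

end PathPacking

section NearlyClosedPath

open SimpleGraph

variable {V : Type*} {G : SimpleGraph V} {a b : V}

/-- A path whose inner vertices have no neighbours off the path and whose ends have at most one
each: all edges leaving the path are accounted for by its two ends, where it can be extended. -/
structure IsNearlyClosedPath (w : G.Walk a b) : Prop where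
  isPath : w.IsPath
  neighborSet_subset :
    ∀ x ∈ w.support, x ≠ a → x ≠ b → G.neighborSet x ⊆ {y | y ∈ w.support}
  subsingleton_start : (G.neighborSet a \ {y | y ∈ w.support}).Subsingleton
  subsingleton_end : (G.neighborSet b \ {y | y ∈ w.support}).Subsingleton

namespace IsNearlyClosedPath

variable {w : G.Walk a b} {v : V}

theorem reverse (hw : IsNearlyClosedPath w) : IsNearlyClosedPath w.reverse where
  isPath := hw.isPath.reverse
  neighborSet_subset x hx hb ha := by
    simpa only [Walk.support_reverse, List.mem_reverse] using
      hw.neighborSet_subset x (by simpa using hx) ha hb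
  subsingleton_start := by
    simpa only [Walk.support_reverse, List.mem_reverse] using hw.subsingleton_end
  subsingleton_end := by
    simpa only [Walk.support_reverse, List.mem_reverse] using hw.subsingleton_start

theorem cons (hw : IsNearlyClosedPath w) (hva : G.Adj v a) (hv : v ∉ w.support)
    (hsub : (G.neighborSet v \ {y | y ∈ w.support}).Subsingleton) :
    IsNearlyClosedPath (w.cons hva) := by
  have support_subset : {y | y ∈ w.support} ⊆ {y | y ∈ (w.cons hva).support} := fun y hy ↦
    List.mem_cons_of_mem v hy
  refine ⟨hw.isPath.cons hv, fun x hx hxv hxb y hxy ↦ ?_,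
    hsub.anti (Set.sdiff_subset_sdiff_right support_subset),
    hw.subsingleton_end.anti (Set.sdiff_subset_sdiff_right support_subset)⟩
  have hxw : x ∈ w.support := (List.mem_cons.1 hx).resolve_left hxv
  obtain rfl | hxa := eq_or_ne x a
  · by_cases hy : y ∈ w.support
    · exact support_subset hy
    · rw [hw.subsingleton_start ⟨hxy, hy⟩ ⟨hva.symm, hv⟩]
      exact Walk.start_mem_support _
  · exact support_subset (hw.neighborSet_subset x hxw hxa hxb hxy)

theorem exists_length_eq_add_one (hw : IsNearlyClosedPath w) (hv : v ∉ w.support)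
    (hnontrivial : (G.neighborSet v).Nontrivial)
    (hsub : (G.neighborSet v \ {y | y ∈ w.support}).Subsingleton) :
    ∃ (a' b' : V) (w' : G.Walk a' b'), IsNearlyClosedPath w' ∧ w'.length = w.length + 1 := by
  obtain ⟨x, hvx, hx⟩ : ∃ x, G.Adj v x ∧ x ∈ w.support := by
    by_contra! h
    have : G.neighborSet v \ {y | y ∈ w.support} = G.neighborSet v :=
      (Set.disjoint_left.2 h).sdiff_eq_left
    exact Set.not_subsingleton_iff.2 hnontrivial (this ▸ hsub)
  have end_of_mem : x = a ∨ x = b := by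
    by_contra! h
    exact hv (hw.neighborSet_subset x hx h.1 h.2 hvx.symm)
  rcases end_of_mem with rfl | rfl
  · exact ⟨_, _, _, hw.cons hvx hv hsub, Walk.length_cons ..⟩
  · refine ⟨_, _, _, hw.reverse.cons hvx (by simpa using hv) (by simpa using hsub), ?_⟩
    rw [Walk.length_cons, Walk.length_reverse]

theorem exists_forall_nontrivial [Finite V] (hw : IsNearlyClosedPath w)
    (hG : ∀ v ∈ G.support, (G.neighborSet v).Nontrivial) :
    ∃ (a' b' : V) (w' : G.Walk a' b'), w'.IsPath ∧ w.length ≤ w'.length ∧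
      ∀ v ∈ G.support, v ∉ w'.support → (G.neighborSet v \ {y | y ∈ w'.support}).Nontrivial := by
  have := Fintype.ofFinite V
  by_contra! h
  have unbounded (n : ℕ) :
      ∃ (a' b' : V) (w' : G.Walk a' b'), IsNearlyClosedPath w' ∧ w'.length = w.length + n := by
    induction n with
    | zero => exact ⟨a, b, w, hw, rfl⟩
    | succ n ih =>
      obtain ⟨a', b', w', hw', hlength⟩ := ih
      obtain ⟨v, hvG, hv, hsub⟩ := h a' b' w' hw'.isPath (by omega)
      obtain ⟨a'', b'', w'', hw'', hlength'⟩ := hw'.exists_length_eq_add_one hv (hG v hvG) hsub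
      exact ⟨a'', b'', w'', hw'', by omega⟩
  obtain ⟨a', b', w', hw', hlength⟩ := unbounded (Fintype.card V)
  have := hw'.isPath.length_lt
  omega

end IsNearlyClosedPath

variable [G.LocallyFinite]

theorem two_le_degree_iff_nontrivial {v : V} :
    2 ≤ G.degree v ↔ (G.neighborSet v).Nontrivial := by
  rw [Nat.succ_le_iff, ← card_neighborFinset_eq_degree, one_lt_card_iff_nontrivial,
    ← nontrivial_coe, coe_neighborFinset]

theorem subsingleton_neighborSet_diff_of_degree_le_two {v w : V} (hvw : G.Adj v w)
    (hv : G.degree v ≤ 2) : (G.neighborSet v \ {w}).Subsingleton := by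
  classical
  have card_erase : #((G.neighborFinset v).erase w) ≤ 1 := by
    rw [card_erase_of_mem (by simpa using hvw), card_neighborFinset_eq_degree]
    omega
  intro x hx y hy
  refine card_le_one.1 card_erase x ?_ y ?_ <;> simp_all

theorem isNearlyClosedPath_of_degree_le_two {x y z : V} (hxz : x ≠ z) (hxy : G.Adj x y)
    (hyz : G.Adj y z) (hx : G.degree x ≤ 2) (hy : G.degree y ≤ 2) (hz : G.degree z ≤ 2) :
    IsNearlyClosedPath (.cons hxy (.cons hyz .nil)) where
  isPath := by simp [hxy.ne, hyz.ne, hxz]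
  neighborSet_subset v hv hvx hvz u hvu := by
    obtain rfl : v = y := by simp_all
    obtain rfl | hux := eq_or_ne u x
    · simp
    · simp [subsingleton_neighborSet_diff_of_degree_le_two hxy.symm hy ⟨hvu, hux⟩
        ⟨hyz, hxz.symm⟩]
  subsingleton_start := (subsingleton_neighborSet_diff_of_degree_le_two hxy hx).anti
    (Set.sdiff_subset_sdiff_right (by simp))
  subsingleton_end := (subsingleton_neighborSet_diff_of_degree_le_two hyz.symm hz).anti
    (Set.sdiff_subset_sdiff_right (by simp))

end NearlyClosedPath

section DegreeReduction

open SimpleGraph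

variable {V : Type*} {G : SimpleGraph V} {s : ℕ}

theorem nontrivial_neighborSet_diff_of_three_le_degree [G.LocallyFinite] {v : V} (w : V)
    (hv : 3 ≤ G.degree v) : (G.neighborSet v \ {w}).Nontrivial := by
  classical
  have card_erase : 1 < #((G.neighborFinset v).erase w) := by
    have := (G.neighborFinset v).pred_card_le_card_erase (a := w)
    rw [card_neighborFinset_eq_degree] at this
    omega
  simpa only [← nontrivial_coe, coe_erase, coe_neighborFinset] using
    one_lt_card_iff_nontrivial.1 card_erase

theorem nontrivial_neighborSet_deleteEdges [G.LocallyFinite]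
    (hG : ∀ x ∈ G.support, (G.neighborSet x).Nontrivial) {u v : V} (hu : 3 ≤ G.degree u)
    (hv : 3 ≤ G.degree v) :
    ∀ x ∈ G.support, ((G.deleteEdges {s(u, v)}).neighborSet x).Nontrivial := by
  intro x hx
  obtain rfl | hxu := eq_or_ne x u
  · refine (nontrivial_neighborSet_diff_of_three_le_degree v hu).mono fun y hy ↦ ?_
    simp_all
  obtain rfl | hxv := eq_or_ne x v
  · refine (nontrivial_neighborSet_diff_of_three_le_degree u hv).mono fun y hy ↦ ?_
    simp_all
  · refine (hG x hx).mono fun y hy ↦ ?_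
    simp_all

theorem adj_spanningCoe_induce_compl {P : Set V} {u v : V} :
    (G.induce Pᶜ).spanningCoe.Adj u v ↔ G.Adj u v ∧ u ∉ P ∧ v ∉ P := by
  simp

theorem neighborSet_spanningCoe_induce_compl {P : Set V} {v : V} (hv : v ∉ P) :
    (G.induce Pᶜ).spanningCoe.neighborSet v = G.neighborSet v \ P := by
  ext u
  simp [hv]

theorem support_spanningCoe_induce_compl_subset {P : Set V} :
    (G.induce Pᶜ).spanningCoe.support ⊆ G.support \ P := by
  rintro v ⟨u, hvu⟩
  obtain ⟨hvu, hv, -⟩ := adj_spanningCoe_induce_compl.1 hvu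
  exact ⟨⟨u, hvu⟩, hv⟩

theorem spanningCoe_induce_compl_lt {P : Set V} {u v : V} (huv : G.Adj u v) (hu : u ∈ P) :
    (G.induce Pᶜ).spanningCoe < G :=
  (spanningCoe_induce_le G _).lt_of_not_ge fun h ↦
    (adj_spanningCoe_induce_compl.1 (h huv)).2.1 hu

theorem exists_isPathPacking_of_spanningCoe_induce_compl [Finite V] (hs : 4 ≤ s) {p : List V}
    (hp : p.IsChain G.Adj) (nodup : p.Nodup) (length_p : 3 ≤ p.length)
    (hsupport : G.support \ {v | v ∈ p} ⊆ (G.induce {v | v ∈ p}ᶜ).spanningCoe.support)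
    {L : List (List V)} (hL : IsPathPacking (G.induce {v | v ∈ p}ᶜ).spanningCoe 2 L)
    (card_le : (G.induce {v | v ∈ p}ᶜ).spanningCoe.support.ncard ≤ (s + 1) * L.length) :
    ∃ M, IsPathPacking G 2 M ∧ G.support.ncard ≤ (s + 1) * M.length := by
  classical
  obtain ⟨M, hM, M_sublist, length_M⟩ := exists_isPathPacking_of_isChain 2 p hp nodup
  refine ⟨L ++ M, (hL.mono (spanningCoe_induce_le G _)).append hM fun v hvL hvM ↦ ?_, ?_⟩
  · have := support_spanningCoe_induce_compl_subset (hL.mem_support two_ne_zero hvL)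
    exact this.2 (M_sublist.subset hvM)
  have length_p_le : p.length ≤ (s + 1) * M.length := by
    calc
      p.length ≤ 5 * M.length := by omega
      _ ≤ (s + 1) * M.length := by gcongr; omega
  calc
    G.support.ncard ≤ ((G.induce {v | v ∈ p}ᶜ).spanningCoe.support ∪ {v | v ∈ p}).ncard :=
      Set.ncard_le_ncard (Set.sdiff_subset_iff.1 hsupport |>.trans_eq (Set.union_comm _ _))
    _ ≤ (s + 1) * L.length + p.length := by
      refine (Set.ncard_union_le _ _).trans (Nat.add_le_add card_le ?_)
      rw [← List.coe_toFinset, Set.ncard_coe_finset]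
      exact p.toFinset_card_le
    _ ≤ (s + 1) * (L ++ M).length := by
      rw [List.length_append, mul_add]
      gcongr

theorem card_filter_mem_neighborFinset_le_degree [G.LocallyFinite] [DecidableEq V] (p : V → Prop)
    [Fintype {b // p b}] (a : V) :
    #{b : {b // p b} | a ∈ G.neighborFinset b} ≤ G.degree a := by
  rw [← card_neighborFinset_eq_degree, ← card_map (.subtype _)]
  refine card_le_card fun b hb ↦ ?_
  simp_all [G.adj_comm a]

theorem exists_isPathPacking_of_indep_of_cover [Fintype V] [DecidableRel G.Adj] (hs : 4 ≤ s)
    (hmax : ∀ v, G.degree v ≤ s)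
    (hindep : ∀ u v, G.Adj u v → 3 ≤ G.degree u → G.degree v ≤ 2)
    (hcover : ∀ v ∈ G.support, G.degree v ≤ 2 → ∃ u, G.Adj v u ∧ 3 ≤ G.degree u) :
    ∃ L, IsPathPacking G 2 L ∧ G.support.ncard ≤ (s + 1) * L.length := by
  classical
  let nbrs : {b // 3 ≤ G.degree b} → Finset V := fun b ↦ G.neighborFinset b
  have card_containing_le_two (a : V) : #{b | a ∈ nbrs b} ≤ 2 := by
    obtain h | ⟨b, hb⟩ := ({b | a ∈ nbrs b} : Finset _).eq_empty_or_nonempty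
    · simp [h]
    exact (card_filter_mem_neighborFinset_le_degree _ a).trans
      (hindep b a (by simpa [nbrs] using hb) b.2)
  obtain ⟨S, card_le, f, f_inj, f_mem⟩ := exists_disjoint_pairs_card_biUnion_add_card_le hs
    card_containing_le_two (fun b ↦ b.2) (fun b ↦ hmax b)
  have adj (q : S × Bool) : G.Adj q.1 (f q) := (mem_neighborFinset ..).1 (f_mem q)
  have f_ne (q : S × Bool) (b : S) : f q ≠ b := fun heq ↦ by
    have degree_f : G.degree (f q) ≤ 2 := hindep _ _ (adj q) q.1.1.2
    have degree_b : 3 ≤ G.degree b := b.1.2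
    rw [heq] at degree_f
    omega
  refine ⟨univ.toList.map fun b : S ↦ [f (b, false), (b : V), f (b, true)],
    isPathPacking_two_map_cherry (nodup_toList _)
      (Subtype.val_injective.comp Subtype.val_injective) f_inj adj f_ne, ?_⟩
  have support_subset : G.support ⊆
      ((univ.biUnion nbrs ∪ ({b | 3 ≤ G.degree b} : Finset V) : Finset V) : Set V) := by
    intro v hv
    by_cases hdeg : 3 ≤ G.degree v
    · simp [hdeg]
    · obtain ⟨u, hvu, hu⟩ := hcover v hv (by omega)
      simp only [coe_union, Set.mem_union, mem_coe, mem_biUnion]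
      exact .inl ⟨⟨u, hu⟩, mem_univ _, (mem_neighborFinset ..).2 hvu.symm⟩
  calc
    G.support.ncard ≤ #(univ.biUnion nbrs ∪ ({b | 3 ≤ G.degree b} : Finset V)) := by
      rw [← Set.ncard_coe_finset]
      exact Set.ncard_le_ncard support_subset
    _ ≤ #(univ.biUnion nbrs) + Fintype.card {b // 3 ≤ G.degree b} :=
      (card_union_le _ _).trans_eq (by rw [Fintype.card_subtype])
    _ ≤ (s + 1) * #S := card_le
    _ = _ := by simp

theorem exists_walk_of_degree_le_two [Finite V] [G.LocallyFinite]
    (hG : ∀ v ∈ G.support, (G.neighborSet v).Nontrivial) {y : V} (hy : y ∈ G.support)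
    (degree_y : G.degree y ≤ 2) (hnbrs : ∀ x, G.Adj y x → G.degree x ≤ 2) :
    ∃ (a b : V) (w : G.Walk a b), w.IsPath ∧ 2 ≤ w.length ∧
      ∀ v ∈ G.support, v ∉ w.support → (G.neighborSet v \ {x | x ∈ w.support}).Nontrivial := by
  obtain ⟨x, hyx, z, hyz, hxz⟩ := hG y hy
  exact (isNearlyClosedPath_of_degree_le_two hxz hyx.symm hyz (hnbrs x hyx) degree_y
    (hnbrs z hyz)).exists_forall_nontrivial hG

theorem exists_isPathPacking_card_support_le [Fintype V] (G : SimpleGraph V) [DecidableRel G.Adj]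
    (hs : 4 ≤ s) (hmin : ∀ v ∈ G.support, (G.neighborSet v).Nontrivial)
    (hmax : ∀ v, G.degree v ≤ s) :
    ∃ L, IsPathPacking G 2 L ∧ G.support.ncard ≤ (s + 1) * L.length := by
  classical
  by_cases hindep : ∀ u v, G.Adj u v → 3 ≤ G.degree u → G.degree v ≤ 2
  swap
  · push Not at hindep
    obtain ⟨u, v, huv, hu, hv⟩ := hindep
    have lt : G.deleteEdges {s(u, v)} < G :=
      (deleteEdges_le _).lt_of_not_ge fun h ↦ by simpa using h huv
    have nontrivial := nontrivial_neighborSet_deleteEdges hmin hu hv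
    obtain ⟨L, hL, card_le⟩ := exists_isPathPacking_card_support_le (G.deleteEdges {s(u, v)}) hs
      (fun x hx ↦ nontrivial x (support_mono lt.le hx))
      (fun x ↦ (degree_le_of_le lt.le).trans (hmax x))
    have support_subset : G.support ⊆ (G.deleteEdges {s(u, v)}).support := fun x hx ↦
      (nontrivial x hx).nonempty
    exact ⟨L, hL.mono lt.le, (Set.ncard_le_ncard support_subset).trans card_le⟩
  by_cases hcover : ∀ v ∈ G.support, G.degree v ≤ 2 → ∃ u, G.Adj v u ∧ 3 ≤ G.degree u
  · exact exists_isPathPacking_of_indep_of_cover hs hmax hindep hcover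
  push Not at hcover
  obtain ⟨y, hy, degree_y, hnbrs⟩ := hcover
  obtain ⟨a, b, w, isPath, length_w, nontrivial⟩ := exists_walk_of_degree_le_two hmin hy degree_y
    fun x hx ↦ Nat.le_of_lt_succ (hnbrs x hx)
  set G' := (G.induce {x | x ∈ w.support}ᶜ).spanningCoe
  have lt : G' < G := spanningCoe_induce_compl_lt
    (w.adj_snd (Walk.not_nil_iff_lt_length.2 (by omega))) w.start_mem_support
  have nontrivial_of_notMem : ∀ v ∈ G.support \ {x | x ∈ w.support},
      (G'.neighborSet v).Nontrivial := fun v hv ↦ by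
    rw [neighborSet_spanningCoe_induce_compl hv.2]
    exact nontrivial v hv.1 hv.2
  obtain ⟨L, hL, card_le⟩ := exists_isPathPacking_card_support_le G' hs
    (fun v hv ↦ nontrivial_of_notMem v (support_spanningCoe_induce_compl_subset hv))
    (fun v ↦ (degree_le_of_le lt.le).trans (hmax v))
  exact exists_isPathPacking_of_spanningCoe_induce_compl hs w.isChain_adj_support
    isPath.support_nodup (by rw [Walk.length_support]; omega)
    (fun v hv ↦ (nontrivial_of_notMem v hv).nonempty) hL card_le
termination_by wellFounded_lt.wrap G
decreasing_by all_goals exact lt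

end DegreeReduction

/-- Let `s ≥ 4` and let `G` be a finite simple graph in which every vertex has
degree at least 2 and at most `s`. Then `λ(G) ≥ v(G)/(s+1)`. -/
theorem stmt_1 {V : Type} [Fintype V] (s : ℕ) (hs : 4 ≤ s)
    (G : SimpleGraph V) [DecidableRel G.Adj]
    (hdeg : ∀ v : V, 2 ≤ G.degree v ∧ G.degree v ≤ s) :
    (G.lambdaK 2 : ℚ) ≥ (Fintype.card V : ℚ) / (s + 1) := by
  obtain ⟨L, hL, card_le⟩ := exists_isPathPacking_card_support_le G hs
    (fun v _ ↦ two_le_degree_iff_nontrivial.1 (hdeg v).1) fun v ↦ (hdeg v).2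
  have support_eq_univ : G.support = Set.univ := Set.eq_univ_of_forall fun v ↦
    (G.degree_pos_iff_mem_support v).1 (two_pos.trans_le (hdeg v).1)
  have card_le_mul_lambdaK : Fintype.card V ≤ (s + 1) * G.lambdaK 2 := by
    calc
      Fintype.card V = G.support.ncard := by
        rw [support_eq_univ, Set.ncard_univ, Nat.card_eq_fintype_card]
      _ ≤ (s + 1) * L.length := card_le
      _ ≤ (s + 1) * G.lambdaK 2 := Nat.mul_le_mul_left _ hL.length_le_lambdaK
  rw [ge_iff_le, div_le_iff₀' (by positivity)]
  exact_mod_cast card_le_mul_lambdaK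
end

section
/- Let G be a finite simple cubic graph (every vertex has degree exactly 3). Then λ(G) ≥ v(G)/4. -/
/-!
The bound is proved in the form `e ≤ v + 2λ` for all graphs of maximum degree at most 3, which makes
induction on the number of vertices possible; in a cubic graph `e = 3v/2`.

Take a packing with as many paths as possible and, among those, with as many edges as possible
within the paths and between uncovered vertices, the former weighted twice. The uncovered vertices
induce a matching. Each of them sends charge along its edges to the paths, `1/3` per edge if it is
isolated among the uncovered vertices and `1/2` if it is matched there, so that it retains at most 2
of its degree. Optimality of the packing shows that a path receives charge at most 1, unless the
path and two uncovered vertices span at least six edges; summing up the charges gives the bound.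

Five vertices spanning at least six edges are removed by induction: the set is deleted, alone or
together with an outside neighbour, or, if it spans exactly six edges and no outside vertex has two
neighbours in it, contracted to a vertex of degree at most 3. A path through the contracted vertex
can be replaced by two paths, because any two vertices of the set that have outside neighbours have
distinct neighbours among the remaining three.
-/

namespace TwoPathPacking

open Finset

section DegreeSum

variable {V : Type*} {G : SimpleGraph V} {S T : Finset V} {v x y : V}

open Classical in
/-- The number of neighbours of `v` in `T`; the vertex `v` itself need not lie in `T`. -/
noncomputable def degreeIn (G : SimpleGraph V) (T : Finset V) (v : V) : ℕ :=
  #{w ∈ T | G.Adj v w}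

/-- Twice the number of edges of the subgraph induced on `T`. Counting twice keeps the discharging
inequalities free of divisions. -/
noncomputable def degreeSum (G : SimpleGraph V) (T : Finset V) : ℕ :=
  ∑ v ∈ T, degreeIn G T v

/-- The subgraph induced on `A` has maximum degree at most 3. -/
def IsSubcubicOn (G : SimpleGraph V) (A : Finset V) : Prop :=
  ∀ v ∈ A, degreeIn G A v ≤ 3

lemma degreeIn_mono (h : S ⊆ T) (v : V) : degreeIn G S v ≤ degreeIn G T v := by
  classical exact card_le_card (filter_subset_filter _ h)

lemma card_le_degreeIn (h : S ⊆ T) (hadj : ∀ w ∈ S, G.Adj v w) : #S ≤ degreeIn G T v := by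
  classical exact card_le_card fun w hw => mem_filter.2 ⟨h hw, hadj w hw⟩

lemma degreeIn_pos : 0 < degreeIn G T v ↔ ∃ w ∈ T, G.Adj v w := by
  simp [degreeIn, card_pos, Finset.Nonempty]

lemma degreeIn_eq_zero : degreeIn G T v = 0 ↔ ∀ w ∈ T, ¬G.Adj v w := by
  simp [degreeIn, filter_eq_empty_iff]

lemma one_lt_degreeIn :
    1 < degreeIn G T v ↔ ∃ s ∈ T, ∃ t ∈ T, s ≠ t ∧ G.Adj v s ∧ G.Adj v t := by
  simp only [degreeIn, one_lt_card, mem_filter]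
  grind

lemma degreeIn_lt_card (hv : v ∈ T) : degreeIn G T v < #T := by
  classical exact card_lt_card (filter_ssubset.2 ⟨v, hv, G.irrefl⟩)

lemma IsSubcubicOn.mono (h : IsSubcubicOn G T) (hST : S ⊆ T) : IsSubcubicOn G S :=
  fun v hv => (degreeIn_mono hST v).trans (h v (hST hv))

lemma sum_degreeIn_comm (S T : Finset V) :
    ∑ v ∈ S, degreeIn G T v = ∑ v ∈ T, degreeIn G S v := by
  classical
  simpa only [degreeIn, bipartiteAbove, bipartiteBelow, G.adj_comm] using
    sum_card_bipartiteAbove_eq_sum_card_bipartiteBelow (s := S) (t := T) G.Adj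

lemma degreeSum_mono (h : S ⊆ T) : degreeSum G S ≤ degreeSum G T :=
  (sum_le_sum fun v _ => degreeIn_mono h v).trans (sum_le_sum_of_subset h)

lemma degreeSum_add_card_le (T : Finset V) : degreeSum G T + #T ≤ #T * #T := by
  rw [card_eq_sum_ones T, degreeSum, ← sum_add_distrib, ← card_eq_sum_ones, ← smul_eq_mul]
  exact sum_le_card_nsmul _ _ _ fun v hv => degreeIn_lt_card hv

lemma degreeIn_singleton_of_adj (h : G.Adj v x) : degreeIn G {x} v = 1 := by
  simp [degreeIn, filter_singleton, h]

lemma degreeIn_singleton_of_not_adj (h : ¬G.Adj v x) : degreeIn G {x} v = 0 := by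
  simp [degreeIn, filter_singleton, h]

lemma degreeIn_singleton_le_one (v x : V) : degreeIn G {x} v ≤ 1 := by
  classical exact card_filter_le {x} (G.Adj v)

lemma degreeIn_singleton_comm (v x : V) : degreeIn G {x} v = degreeIn G {v} x := by
  simpa using sum_degreeIn_comm (G := G) {v} {x}

variable [DecidableEq V]

lemma degreeIn_union (h : Disjoint S T) (v : V) :
    degreeIn G (S ∪ T) v = degreeIn G S v + degreeIn G T v := by
  classical
  rw [degreeIn, filter_union, card_union_of_disjoint (disjoint_filter_filter h)]
  rfl

lemma degreeIn_sdiff_add (h : S ⊆ T) (v : V) :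
    degreeIn G (T \ S) v + degreeIn G S v = degreeIn G T v := by
  rw [← degreeIn_union sdiff_disjoint, sdiff_union_of_subset h]

lemma degreeIn_biUnion {P : Finset (Finset V)} (h : (P : Set (Finset V)).PairwiseDisjoint id)
    (v : V) : degreeIn G (P.biUnion id) v = ∑ q ∈ P, degreeIn G q v := by
  classical
  simp only [degreeIn, card_filter, sum_biUnion h, id_eq]

lemma degreeIn_insert (hx : x ∉ T) (v : V) :
    degreeIn G (insert x T) v = degreeIn G {x} v + degreeIn G T v := by
  rw [insert_eq, degreeIn_union (disjoint_singleton_left.2 hx)]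

lemma degreeIn_erase_add (hx : x ∈ T) (v : V) :
    degreeIn G (T.erase x) v + degreeIn G {x} v = degreeIn G T v := by
  rw [add_comm, ← degreeIn_insert (notMem_erase x T), insert_erase hx]

lemma degreeIn_erase_self (v : V) : degreeIn G (T.erase v) v = degreeIn G T v := by
  classical
  rw [degreeIn, degreeIn, filter_erase, erase_eq_of_notMem]
  simp

lemma degreeSum_union (h : Disjoint S T) :
    degreeSum G (S ∪ T) = degreeSum G S + degreeSum G T + 2 * ∑ v ∈ S, degreeIn G T v := by
  simp only [degreeSum, sum_union h, degreeIn_union h, sum_add_distrib, sum_degreeIn_comm T S]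
  ring

lemma degreeSum_insert (hx : x ∉ T) :
    degreeSum G (insert x T) = degreeSum G T + 2 * degreeIn G T x := by
  rw [insert_eq, degreeSum_union (disjoint_singleton_left.2 hx)]
  simp [degreeSum, degreeIn]

lemma degreeSum_erase_add (hx : x ∈ T) :
    degreeSum G (T.erase x) + 2 * degreeIn G T x = degreeSum G T := by
  rw [← degreeIn_erase_self, ← degreeSum_insert (notMem_erase x T), insert_erase hx]

lemma degreeSum_pair (h : x ≠ y) : degreeSum G {x, y} = 2 * degreeIn G {y} x := by
  rw [degreeSum_insert (by simpa using h)]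
  simp [degreeSum, degreeIn]

lemma degreeSum_sdiff_add (h : S ⊆ T) :
    degreeSum G (T \ S) + degreeSum G S + 2 * ∑ v ∈ S, degreeIn G (T \ S) v = degreeSum G T := by
  rw [add_comm (degreeSum G (T \ S)), ← degreeSum_union disjoint_sdiff, union_sdiff_of_subset h]

lemma IsSubcubicOn.degreeSum_add_sum_le (h : IsSubcubicOn G T) (hST : S ⊆ T) :
    degreeSum G S + ∑ v ∈ S, degreeIn G (T \ S) v ≤ 3 * #S := by
  rw [degreeSum, add_comm, ← sum_add_distrib, mul_comm]
  refine sum_le_card_nsmul _ _ _ fun v hv => ?_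
  rw [degreeIn_sdiff_add hST]
  exact h v (hST hv)

lemma IsSubcubicOn.degreeSum_add_le (h : IsSubcubicOn G T) (hST : S ⊆ T) :
    degreeSum G T + degreeSum G S ≤ degreeSum G (T \ S) + 6 * #S := by
  have hsplit := degreeSum_sdiff_add (G := G) hST
  have hcount := h.degreeSum_add_sum_le hST
  lia

end DegreeSum

lemma even_degreeSum {V : Type*} {G : SimpleGraph V} (T : Finset V) : Even (degreeSum G T) := by
  classical
  induction T using Finset.induction_on with
  | empty => simp [degreeSum]
  | insert x T hx ih => exact degreeSum_insert hx ▸ ih.add (even_two_mul _)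

section Packing

variable {V : Type*} [DecidableEq V] {G : SimpleGraph V} {A B q r : Finset V}
  {x y z : V} {k l : ℕ}

/-- `q` is the vertex set of a (not necessarily induced) 2-edge path of `G`. Only the vertex sets
matter for vertex-disjointness, so packings consist of these sets. -/
def IsTwoPath (G : SimpleGraph V) (q : Finset V) : Prop :=
  ∃ x y z, x ≠ z ∧ G.Adj x y ∧ G.Adj y z ∧ q = {x, y, z}

/-- `P` is a family of pairwise disjoint 2-edge paths inside `A`. -/
structure IsTwoPathPacking (G : SimpleGraph V) (A : Finset V) (P : Finset (Finset V)) : Prop where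
  isTwoPath : ∀ q ∈ P, IsTwoPath G q
  subset : ∀ q ∈ P, q ⊆ A
  pairwiseDisjoint : (P : Set (Finset V)).PairwiseDisjoint id

/-- There are `k` pairwise disjoint 2-edge paths inside `A`. -/
def HasTwoPaths (G : SimpleGraph V) (A : Finset V) (k : ℕ) : Prop :=
  ∃ P, IsTwoPathPacking G A P ∧ #P = k

lemma isTwoPath_triple (hxy : G.Adj x y) (hyz : G.Adj y z) (hxz : x ≠ z) :
    IsTwoPath G {x, y, z} :=
  ⟨x, y, z, hxz, hxy, hyz, rfl⟩

lemma degreeSum_triple (hxy : G.Adj x y) (hyz : G.Adj y z) (hxz : x ≠ z) :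
    degreeSum G {x, y, z} = 4 + 2 * degreeIn G {z} x := by
  rw [degreeSum_insert (by simp [hxy.ne, hxz]), degreeSum_pair hyz.ne,
    degreeIn_insert (by simp [hyz.ne]), degreeIn_singleton_of_adj hxy,
    degreeIn_singleton_of_adj hyz]
  ring

namespace IsTwoPath

lemma card_eq (h : IsTwoPath G q) : #q = 3 := by
  obtain ⟨x, y, z, hxz, hxy, hyz, rfl⟩ := h
  exact card_eq_three.2 ⟨x, y, z, hxy.ne, hxz, hyz.ne, rfl⟩

lemma nonempty (h : IsTwoPath G q) : q.Nonempty :=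
  card_pos.1 (by simp [h.card_eq])

lemma four_le_degreeSum (h : IsTwoPath G q) : 4 ≤ degreeSum G q := by
  obtain ⟨x, y, z, hxz, hxy, hyz, rfl⟩ := h
  simp [degreeSum_triple hxy hyz hxz]

end IsTwoPath

lemma exists_isTwoPath_of_card_lt_degreeSum (h : #A < degreeSum G A) :
    ∃ q ⊆ A, IsTwoPath G q := by
  rw [card_eq_sum_ones] at h
  obtain ⟨v, hv, hlt⟩ := exists_lt_of_sum_lt h
  obtain ⟨s, hs, t, ht, hst, hvs, hvt⟩ := one_lt_degreeIn.1 hlt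
  exact ⟨{s, v, t}, by simp [insert_subset_iff, *], isTwoPath_triple hvs.symm hvt hst⟩

namespace IsTwoPathPacking

variable {P Q : Finset (Finset V)}

lemma biUnion_subset (h : IsTwoPathPacking G A P) : P.biUnion id ⊆ A :=
  Finset.biUnion_subset.2 h.subset

lemma card_biUnion (h : IsTwoPathPacking G A P) : #(P.biUnion id) = 3 * #P := by
  rw [Finset.card_biUnion h.pairwiseDisjoint, mul_comm, ← smul_eq_mul]
  exact sum_eq_card_nsmul fun q hq => (h.isTwoPath q hq).card_eq

lemma disjoint (hP : IsTwoPathPacking G A P) (hQ : IsTwoPathPacking G B Q) (hAB : Disjoint A B) :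
    Disjoint P Q :=
  disjoint_left.2 fun q hqP hqQ => (hP.isTwoPath q hqP).nonempty.ne_empty <|
    disjoint_self.1 (hAB.mono (hP.subset q hqP) (hQ.subset q hqQ))

lemma union (hP : IsTwoPathPacking G A P) (hQ : IsTwoPathPacking G B Q) (hAB : Disjoint A B) :
    IsTwoPathPacking G (A ∪ B) (P ∪ Q) where
  isTwoPath q hq := (mem_union.1 hq).elim (hP.isTwoPath q) (hQ.isTwoPath q)
  subset q hq := (mem_union.1 hq).elim (fun h => (hP.subset q h).trans subset_union_left)
    fun h => (hQ.subset q h).trans subset_union_right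
  pairwiseDisjoint := by
    rw [coe_union]
    exact hP.pairwiseDisjoint.union hQ.pairwiseDisjoint fun q hq r hr _ =>
      hAB.mono (hP.subset q hq) (hQ.subset r hr)

end IsTwoPathPacking

lemma IsTwoPath.isTwoPathPacking (h : IsTwoPath G q) : IsTwoPathPacking G q {q} :=
  ⟨by simpa using h, by simp, by simp⟩

namespace HasTwoPaths

lemma mono (h : HasTwoPaths G A k) (hAB : A ⊆ B) : HasTwoPaths G B k := by
  obtain ⟨P, hP, rfl⟩ := h
  exact ⟨P, ⟨hP.isTwoPath, fun q hq => (hP.subset q hq).trans hAB, hP.pairwiseDisjoint⟩, rfl⟩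

lemma add (hA : HasTwoPaths G A k) (hB : HasTwoPaths G B l) (hAB : Disjoint A B) :
    HasTwoPaths G (A ∪ B) (k + l) := by
  obtain ⟨P, hP, rfl⟩ := hA
  obtain ⟨Q, hQ, rfl⟩ := hB
  exact ⟨P ∪ Q, hP.union hQ hAB, card_union_of_disjoint (hP.disjoint hQ hAB)⟩

end HasTwoPaths

lemma IsTwoPath.hasTwoPaths (h : IsTwoPath G q) (hq : q ⊆ A) : HasTwoPaths G A 1 :=
  HasTwoPaths.mono ⟨{q}, h.isTwoPathPacking, card_singleton q⟩ hq

lemma hasTwoPaths_two (hq : IsTwoPath G q) (hr : IsTwoPath G r) (hqr : Disjoint q r)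
    (hqA : q ⊆ A) (hrA : r ⊆ A) : HasTwoPaths G A 2 :=
  ((hq.hasTwoPaths subset_rfl).add (hr.hasTwoPaths subset_rfl) hqr).mono (union_subset hqA hrA)

end Packing

section Contraction

variable {V : Type*} [DecidableEq V] {G H : SimpleGraph V} {A B S : Finset V} {t v : V} {k : ℕ}

/-- The subgraph induced on `A` satisfies the bound `edges ≤ vertices + 2 · paths`, doubled. This is
the form of the theorem that is stable under the reductions. -/
def HasManyTwoPaths (G : SimpleGraph V) (A : Finset V) : Prop :=
  ∃ k, HasTwoPaths G A k ∧ degreeSum G A ≤ 2 * #A + 4 * k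

/-- The graph obtained by contracting `S` to the vertex `t`, on the same vertex type: for `t ∈ S`
the other vertices of `S` become isolated. -/
def contract (G : SimpleGraph V) (S : Finset V) (t : V) : SimpleGraph V :=
  G.map fun v => if v ∈ S then t else v

lemma HasManyTwoPaths.of_sdiff (hS : S ⊆ A) (hk : HasTwoPaths G S k)
    (he : degreeSum G A ≤ degreeSum G (A \ S) + 2 * #S + 4 * k)
    (h : HasManyTwoPaths G (A \ S)) : HasManyTwoPaths G A := by
  obtain ⟨l, hl, hle⟩ := h
  have hcard := card_sdiff_add_card_eq_card hS
  exact ⟨l + k, (hl.add hk sdiff_disjoint).mono (sdiff_union_of_subset hS).subset, by lia⟩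

lemma HasTwoPaths.of_adj_imp (hadj : ∀ u ∈ A, ∀ v ∈ A, G.Adj u v → H.Adj u v)
    (h : HasTwoPaths G A k) : HasTwoPaths H A k := by
  obtain ⟨P, hP, rfl⟩ := h
  refine ⟨P, ⟨fun q hq => ?_, hP.subset, hP.pairwiseDisjoint⟩, rfl⟩
  have hqA := hP.subset q hq
  obtain ⟨x, y, z, hxz, hxy, hyz, rfl⟩ := hP.isTwoPath q hq
  simp only [insert_subset_iff, singleton_subset_iff] at hqA
  exact isTwoPath_triple (hadj x hqA.1 y hqA.2.1 hxy) (hadj y hqA.2.1 z hqA.2.2 hyz) hxz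

lemma IsTwoPathPacking.erase {P : Finset (Finset V)} (h : IsTwoPathPacking G A P) (hq : q ∈ P) :
    IsTwoPathPacking G (A \ q) (P.erase q) where
  isTwoPath r hr := h.isTwoPath r (mem_of_mem_erase hr)
  subset r hr := subset_sdiff.2 ⟨h.subset r (mem_of_mem_erase hr),
    h.pairwiseDisjoint (mem_of_mem_erase hr) hq (ne_of_mem_erase hr)⟩
  pairwiseDisjoint := h.pairwiseDisjoint.subset (coe_subset.2 (erase_subset q P))

lemma contract_adj (ht : t ∈ S) (hu : u ∉ S) (hv : v ∉ S) :
    (contract G S t).Adj u v ↔ G.Adj u v := by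
  simp only [contract, SimpleGraph.map_adj']
  refine ⟨by grind, fun h => ⟨h.ne, u, v, h, if_neg hu, if_neg hv⟩⟩

lemma contract_adj_left (ht : t ∈ S) (hv : v ∉ S) :
    (contract G S t).Adj t v ↔ ∃ s ∈ S, G.Adj s v := by
  simp only [contract, SimpleGraph.map_adj']
  refine ⟨by grind, fun ⟨s, hs, h⟩ => ⟨by grind, s, v, h, if_pos hs, if_neg hv⟩⟩

lemma degreeIn_contract (ht : t ∈ S) (hB : Disjoint B S) (hv : v ∉ S) :
    degreeIn (contract G S t) B v = degreeIn G B v := by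
  classical
  exact congrArg card (filter_congr fun w hw => contract_adj ht hv (disjoint_left.1 hB hw))

lemma degreeIn_contract_singleton (ht : t ∈ S) (hv : v ∉ S) (hone : degreeIn G S v ≤ 1) :
    degreeIn (contract G S t) {t} v = degreeIn G S v := by
  rw [degreeIn_singleton_comm]
  by_cases h : ∃ s ∈ S, G.Adj s v
  · obtain ⟨s, hs, hsv⟩ := h
    have hpos : 0 < degreeIn G S v := degreeIn_pos.2 ⟨s, hs, hsv.symm⟩
    rw [degreeIn_singleton_of_adj ((contract_adj_left ht hv).2 ⟨s, hs, hsv⟩)]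
    lia
  · rw [degreeIn_singleton_of_not_adj (h ∘ (contract_adj_left ht hv).1), eq_comm, degreeIn_eq_zero]
    exact fun s hs hvs => h ⟨s, hs, hvs.symm⟩

lemma degreeIn_contract_self (ht : t ∈ S) (hB : Disjoint B S)
    (hone : ∀ v ∈ B, degreeIn G S v ≤ 1) :
    degreeIn (contract G S t) B t = ∑ v ∈ S, degreeIn G B v :=
  calc degreeIn (contract G S t) B t
      = ∑ v ∈ B, degreeIn (contract G S t) {t} v := by rw [sum_degreeIn_comm, sum_singleton]
    _ = ∑ v ∈ B, degreeIn G S v := sum_congr rfl fun v hv =>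
        degreeIn_contract_singleton ht (disjoint_left.1 hB hv) (hone v hv)
    _ = ∑ v ∈ S, degreeIn G B v := sum_degreeIn_comm B S

lemma degreeSum_contract (ht : t ∈ S) (hB : Disjoint B S)
    (hone : ∀ v ∈ B, degreeIn G S v ≤ 1) :
    degreeSum (contract G S t) (insert t B) = degreeSum G B + 2 * ∑ v ∈ S, degreeIn G B v := by
  rw [degreeSum_insert fun h => disjoint_left.1 hB h ht, degreeIn_contract_self ht hB hone]
  exact congrArg (· + _) <| sum_congr rfl fun v hv =>
    degreeIn_contract ht hB (disjoint_left.1 hB hv)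

lemma IsSubcubicOn.contract (h : IsSubcubicOn G A) (hS : S ⊆ A) (ht : t ∈ S)
    (hone : ∀ v ∈ A \ S, degreeIn G S v ≤ 1) (hout : ∑ v ∈ S, degreeIn G (A \ S) v ≤ 3) :
    IsSubcubicOn (contract G S t) (insert t (A \ S)) := by
  intro v hv
  rw [degreeIn_insert (by simp [ht])]
  obtain rfl | hv := mem_insert.1 hv
  · rw [degreeIn_singleton_of_not_adj (SimpleGraph.irrefl _), zero_add,
      degreeIn_contract_self ht sdiff_disjoint hone]
    exact hout
  · have ⟨hvA, hvS⟩ := mem_sdiff.1 hv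
    rw [degreeIn_contract_singleton ht hvS (hone v hv), degreeIn_contract ht sdiff_disjoint hvS,
      add_comm, degreeIn_sdiff_add hS]
    exact h v hvA

/-- Every packing of the contracted graph lifts to one with an additional path: if `t` is covered,
the path through `t` is replaced by two paths. -/
lemma HasManyTwoPaths.of_contract (hS : S ⊆ A) (ht : t ∈ S)
    (hone : ∀ v ∈ A \ S, degreeIn G S v ≤ 1) (he : degreeSum G S ≤ 2 * #S + 2)
    (hpath : HasTwoPaths G S 1)
    (hlift : ∀ q ⊆ insert t (A \ S), t ∈ q → IsTwoPath (contract G S t) q →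
      HasTwoPaths G (S ∪ q) 2)
    (h : HasManyTwoPaths (contract G S t) (insert t (A \ S))) : HasManyTwoPaths G A := by
  obtain ⟨_, ⟨P, hP, rfl⟩, hle⟩ := h
  have htB : t ∉ A \ S := by simp [ht]
  have hcard := card_sdiff_add_card_eq_card hS
  have hsplit := degreeSum_sdiff_add (G := G) hS
  rw [degreeSum_contract ht sdiff_disjoint hone, card_insert_of_notMem htB] at hle
  suffices HasTwoPaths G A (#P + 1) from ⟨#P + 1, this, by lia⟩
  have restrict {B : Finset V} {Q : Finset (Finset V)} (hB : B ⊆ A \ S)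
      (hQ : IsTwoPathPacking (TwoPathPacking.contract G S t) B Q) : HasTwoPaths G B #Q :=
    HasTwoPaths.of_adj_imp (fun u hu v hv => (contract_adj ht (mem_sdiff.1 (hB hu)).2
      (mem_sdiff.1 (hB hv)).2).1) ⟨Q, hQ, rfl⟩
  by_cases hcov : ∃ q ∈ P, t ∈ q
  · obtain ⟨q, hq, htq⟩ := hcov
    have hB : insert t (A \ S) \ q ⊆ A \ S := by grind
    have hqA := hP.subset q hq
    rw [← card_erase_add_one hq]
    refine ((restrict hB (hP.erase hq)).add (hlift q hqA htq (hP.isTwoPath q hq)) ?_).mono ?_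
    · rw [disjoint_left]
      grind
    · grind
  · have hPB : IsTwoPathPacking (TwoPathPacking.contract G S t) (A \ S) P :=
      ⟨hP.isTwoPath, fun q hq => (subset_insert_iff_of_notMem fun h => hcov ⟨q, hq, h⟩).1
        (hP.subset q hq), hP.pairwiseDisjoint⟩
    exact ((restrict subset_rfl hPB).add hpath sdiff_disjoint).mono
      (sdiff_union_of_subset hS).subset

end Contraction

section DenseFive

variable {V : Type*} {G : SimpleGraph V} {A S q : Finset V}
  {s s' t w w' y z : V}

/-- `S` induces a subcubic graph on five vertices with at least six edges.
These are the only local obstructions to the discharging argument. -/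
structure IsDenseFive (G : SimpleGraph V) (S : Finset V) : Prop where
  card_eq : #S = 5
  le_degreeSum : 12 ≤ degreeSum G S
  isSubcubicOn : IsSubcubicOn G S

lemma IsDenseFive.degreeSum_eq (h : IsDenseFive G S) : degreeSum G S = 12 ∨ degreeSum G S = 14 := by
  have heven := Nat.even_iff.1 (even_degreeSum (G := G) S)
  have hle : degreeSum G S ≤ #S • 3 := sum_le_card_nsmul _ _ _ h.isSubcubicOn
  rw [h.card_eq, smul_eq_mul] at hle
  have := h.le_degreeSum
  lia

lemma IsDenseFive.degreeIn_pos_of_degreeSum_eq (h : IsDenseFive G S) (hsum : degreeSum G S = 14)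
    (hs : s ∈ S) : 0 < degreeIn G S s := by
  classical
  have hsplit := degreeSum_erase_add (G := G) hs
  have hle := degreeSum_add_card_le (G := G) (S.erase s)
  rw [card_erase_of_mem hs, h.card_eq] at hle
  lia

lemma exists_ne_adj_adj (hs : 0 < degreeIn G S s) (ht : 0 < degreeIn G S t)
    (h : ∀ u ∈ S, G.Adj s u → G.Adj t u → 1 < degreeIn G S s ∨ 1 < degreeIn G S t) :
    ∃ u ∈ S, ∃ v ∈ S, u ≠ v ∧ G.Adj s u ∧ G.Adj t v := by
  obtain ⟨u, hu, hsu⟩ := degreeIn_pos.1 hs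
  obtain ⟨v, hv, htv⟩ := degreeIn_pos.1 ht
  obtain rfl | huv := eq_or_ne u v
  · simp only [one_lt_degreeIn] at h
    grind
  · exact ⟨u, hu, v, hv, huv, hsu, htv⟩

variable [DecidableEq V]

lemma IsSubcubicOn.degreeIn_lt_three_of_adj (h : IsSubcubicOn G A) (hS : S ⊆ A) (hs : s ∈ S)
    (hw : w ∈ A \ S) (hsw : G.Adj s w) : degreeIn G S s < 3 := by
  have hpos : 0 < degreeIn G (A \ S) s := degreeIn_pos.2 ⟨w, hw, hsw⟩
  have hsplit := degreeIn_sdiff_add (G := G) hS s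
  have := h s (hS hs)
  lia

namespace IsDenseFive

lemma hasTwoPaths_erase (h : IsDenseFive G S) (hs : s ∈ S) : HasTwoPaths G (S.erase s) 1 := by
  have hcard := card_erase_add_one hs
  have hsum := degreeSum_erase_add (G := G) hs
  have hdeg := h.isSubcubicOn s hs
  have := h.card_eq
  have := h.le_degreeSum
  obtain ⟨q, hqS, hq⟩ := exists_isTwoPath_of_card_lt_degreeSum (G := G) (A := S.erase s) (by lia)
  exact hq.hasTwoPaths hqS

lemma hasTwoPaths_erase_erase (h : IsDenseFive G S) (hs : s ∈ S) (ht : t ∈ S.erase s)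
    (hsum : 2 * degreeIn G S s + 2 * degreeIn G (S.erase s) t + 4 ≤ degreeSum G S) :
    HasTwoPaths G ((S.erase s).erase t) 1 := by
  have hcard_s := card_erase_add_one hs
  have hcard_t := card_erase_add_one ht
  have hsum_s := degreeSum_erase_add (G := G) hs
  have hsum_t := degreeSum_erase_add (G := G) ht
  have := h.card_eq
  obtain ⟨q, hqS, hq⟩ :=
    exists_isTwoPath_of_card_lt_degreeSum (G := G) (A := (S.erase s).erase t) (by lia)
  exact hq.hasTwoPaths hqS

lemma exists_matching (h : IsDenseFive G S) (hs : s ∈ S) (ht : t ∈ S) (hst : s ≠ t)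
    (hds : degreeIn G S s < 3) (hdt : degreeIn G S t < 3) :
    ∃ u ∈ S \ {s, t}, ∃ v ∈ S \ {s, t}, u ≠ v ∧ G.Adj s u ∧ G.Adj t v := by
  have hsub : {s, t} ⊆ S := by grind
  set R := S \ {s, t} with hR
  have hcardR : #R = 3 := by rw [card_sdiff_of_subset hsub, h.card_eq, card_pair hst]
  have degreeIn_split (v : V) :
      degreeIn G R v + (degreeIn G {s} v + degreeIn G {t} v) = degreeIn G S v := by
    rw [← degreeIn_insert (by simpa using hst), degreeIn_sdiff_add hsub]
  have hs_split := degreeIn_split s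
  have ht_split := degreeIn_split t
  rw [degreeIn_singleton_of_not_adj G.irrefl] at hs_split ht_split
  rw [degreeIn_singleton_comm t s] at ht_split
  have hsum := degreeSum_sdiff_add (G := G) hsub
  rw [degreeSum_pair hst, sum_pair hst, ← hR] at hsum
  have hsumR := degreeSum_add_card_le (G := G) R
  rw [hcardR] at hsumR
  have hle := h.le_degreeSum
  refine exists_ne_adj_adj (by lia) (by lia) fun u hu hsu htu => ?_
  -- Otherwise `{s, t, u}` is a triangle, which leaves `u` at most one edge in `R`.
  by_contra! hone
  have hu_split := degreeIn_split u
  rw [degreeIn_singleton_of_adj hsu.symm, degreeIn_singleton_of_adj htu.symm] at hu_split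
  have := h.isSubcubicOn u (sdiff_subset hu)
  have hsumRu := degreeSum_erase_add (G := G) hu
  have hpair := degreeSum_add_card_le (G := G) (R.erase u)
  rw [card_erase_of_mem hu, hcardR] at hpair
  have := degreeIn_singleton_le_one (G := G) s t
  lia

lemma hasTwoPaths_of_tail (h : IsDenseFive G S) (hs : s ∈ S) (hsy : G.Adj s y) (hyz : G.Adj y z)
    (hy : y ∉ S) (hz : z ∉ S) : HasTwoPaths G (S ∪ {y, z}) 2 := by
  have hpath := isTwoPath_triple hsy hyz (by grind)
  refine ((h.hasTwoPaths_erase hs).add (hpath.hasTwoPaths subset_rfl) ?_).mono (by grind)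
  rw [disjoint_left]
  grind

lemma hasTwoPaths_of_branches (h : IsDenseFive G S) (hs : s ∈ S) (hs' : s' ∈ S)
    (hds : degreeIn G S s < 3) (hds' : degreeIn G S s' < 3) (hw : w ∉ S) (hw' : w' ∉ S)
    (hww' : w ≠ w') (hsw : G.Adj s w) (hsw' : G.Adj s' w') : HasTwoPaths G (S ∪ {w, w'}) 2 := by
  obtain rfl | hss' := eq_or_ne s s'
  · have hpath := isTwoPath_triple hsw.symm hsw' hww'
    refine ((h.hasTwoPaths_erase hs).add (hpath.hasTwoPaths subset_rfl) ?_).mono (by grind)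
    rw [disjoint_left]
    grind
  · obtain ⟨u, hu, v, hv, huv, hsu, hsv⟩ := h.exists_matching hs hs' hss' hds hds'
    refine hasTwoPaths_two (isTwoPath_triple hsw.symm hsu (by grind))
      (isTwoPath_triple hsw'.symm hsv (by grind)) ?_ (by grind) (by grind)
    rw [disjoint_left]
    grind

lemma hasTwoPaths_of_contract (h : IsDenseFive G S) (hA : IsSubcubicOn G A) (hS : S ⊆ A)
    (ht : t ∈ S) (hqA : q ⊆ insert t (A \ S)) (htq : t ∈ q) (hq : IsTwoPath (contract G S t) q) :
    HasTwoPaths G (S ∪ q) 2 := by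
  have mem_sdiff_of_ne {v : V} (hv : v ∈ q) (hvt : v ≠ t) : v ∈ A \ S := by grind
  have notMem {v : V} (hv : v ∈ q) (hvt : v ≠ t) : v ∉ S :=
    (mem_sdiff.1 (mem_sdiff_of_ne hv hvt)).2
  have exists_adj {v : V} (hv : v ∈ q) (htv : (contract G S t).Adj t v) :
      ∃ s ∈ S, G.Adj s v ∧ degreeIn G S s < 3 := by
    obtain ⟨s, hs, hsv⟩ := (contract_adj_left ht (notMem hv htv.ne')).1 htv
    exact ⟨s, hs, hsv, hA.degreeIn_lt_three_of_adj hS hs (mem_sdiff_of_ne hv htv.ne') hsv⟩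
  have tail {y z : V} (hqy : q = {t, y, z}) (hty : (contract G S t).Adj t y)
      (hyz : (contract G S t).Adj y z) (htz : t ≠ z) : HasTwoPaths G (S ∪ q) 2 := by
    have hy := notMem (v := y) (by grind) hty.ne'
    have hz := notMem (v := z) (by grind) htz.symm
    obtain ⟨s, hs, hsy, -⟩ := exists_adj (by grind) hty
    exact (h.hasTwoPaths_of_tail hs hsy ((contract_adj ht hy hz).1 hyz) hy hz).mono (by grind)
  obtain ⟨x, y, z, hxz, hxy, hyz, hqxyz⟩ := hq
  obtain rfl | rfl | rfl : t = x ∨ t = y ∨ t = z := by simpa [hqxyz] using htq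
  · exact tail hqxyz hxy hyz hxz
  · obtain ⟨s, hs, hsx, hds⟩ := exists_adj (by grind) hxy.symm
    obtain ⟨s', hs', hsz, hds'⟩ := exists_adj (by grind) hyz
    exact (h.hasTwoPaths_of_branches hs hs' hds hds' (notMem (by grind) hxy.ne)
      (notMem (by grind) hyz.ne') hxz hsx hsz).mono (by grind)
  · exact tail (by grind) hyz.symm hxy.symm hxz.symm

lemma hasTwoPaths_insert_of_one_lt_degreeIn (h : IsDenseFive G S) (hA : IsSubcubicOn G A)
    (hS : S ⊆ A) (hw : w ∈ A \ S) (hdeg : 1 < degreeIn G S w) : HasTwoPaths G (insert w S) 2 := by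
  obtain ⟨s, hs, t, ht, hst, hws, hwt⟩ := one_lt_degreeIn.1 hdeg
  have hds := hA.degreeIn_lt_three_of_adj hS hs hw hws.symm
  have hdt := hA.degreeIn_lt_three_of_adj hS ht hw hwt.symm
  have hdt' := degreeIn_mono (G := G) (erase_subset s S) t
  have := h.le_degreeSum
  have hrest := h.hasTwoPaths_erase_erase hs (mem_erase.2 ⟨hst.symm, ht⟩) (by lia)
  have hpath := isTwoPath_triple hws.symm hwt hst
  refine (hrest.add (hpath.hasTwoPaths subset_rfl) ?_).mono (by grind)
  rw [disjoint_left]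
  grind

lemma hasTwoPaths_insert_of_adj (h : IsDenseFive G S) (hsum : degreeSum G S = 14)
    (hA : IsSubcubicOn G A) (hS : S ⊆ A) (hs : s ∈ S) (hw : w ∈ A \ S) (hsw : G.Adj s w) :
    HasTwoPaths G (insert w S) 2 := by
  have hds := hA.degreeIn_lt_three_of_adj hS hs hw hsw
  obtain ⟨u, hu, hsu⟩ := degreeIn_pos.1 (h.degreeIn_pos_of_degreeSum_eq hsum hs)
  have hdu := degreeIn_erase_add (G := G) hs u
  rw [degreeIn_singleton_of_adj hsu.symm] at hdu
  have := h.isSubcubicOn u hu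
  have hrest := h.hasTwoPaths_erase_erase hs (mem_erase.2 ⟨hsu.ne', hu⟩) (by lia)
  have hpath := isTwoPath_triple hsw.symm hsu (by grind)
  refine (hrest.add (hpath.hasTwoPaths subset_rfl) ?_).mono (by grind)
  rw [disjoint_left]
  grind

end IsDenseFive

lemma HasManyTwoPaths.of_insert (hA : IsSubcubicOn G A) (hS : S ⊆ A) (hcard : #S = 5)
    (hw : w ∈ A \ S) (hpaths : HasTwoPaths G (insert w S) 2)
    (hsum : 16 ≤ degreeSum G S + 2 * degreeIn G S w)
    (h : HasManyTwoPaths G (A \ insert w S)) : HasManyTwoPaths G A := by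
  have ⟨hwA, hwS⟩ := mem_sdiff.1 hw
  have hsub := insert_subset hwA hS
  have hle := hA.degreeSum_add_le hsub
  rw [degreeSum_insert hwS, card_insert_of_notMem hwS] at hle
  exact .of_sdiff hsub hpaths (by rw [card_insert_of_notMem hwS]; lia) h

lemma IsDenseFive.hasManyTwoPaths (h : IsDenseFive G S) (hS : S ⊆ A) (hA : IsSubcubicOn G A)
    (ih : ∀ (H : SimpleGraph V) (B : Finset V), #B < #A → IsSubcubicOn H B →
      HasManyTwoPaths H B) : HasManyTwoPaths G A := by
  have hcard := h.card_eq
  have hle := h.le_degreeSum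
  obtain ⟨t, ht⟩ : S.Nonempty := card_pos.1 (by lia)
  have hpath : HasTwoPaths G S 1 := (h.hasTwoPaths_erase ht).mono (erase_subset t S)
  have delete {T : Finset V} (htT : t ∈ T) : HasManyTwoPaths G (A \ T) :=
    ih G _ (card_lt_card (ssubset_iff_of_subset sdiff_subset |>.2 ⟨t, hS ht, by simp [htT]⟩))
      (hA.mono sdiff_subset)
  by_cases hone : ∀ v ∈ A \ S, degreeIn G S v ≤ 1
  swap
  · push Not at hone
    obtain ⟨w, hw, hdeg⟩ := hone
    exact .of_insert hA hS hcard hw (h.hasTwoPaths_insert_of_one_lt_degreeIn hA hS hw hdeg)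
      (by lia) (delete (mem_insert_of_mem ht))
  obtain hsum | hsum := h.degreeSum_eq
  · have hsplit := card_sdiff_add_card_eq_card hS
    have hout := hA.degreeSum_add_sum_le hS
    refine .of_contract hS ht hone (by lia) hpath
      (fun q hqA htq hq => h.hasTwoPaths_of_contract hA hS ht hqA htq hq)
      (ih _ _ ?_ (hA.contract hS ht hone (by lia)))
    rw [card_insert_of_notMem (by simp [ht])]
    lia
  by_cases hedge : ∃ s ∈ S, ∃ w ∈ A \ S, G.Adj s w
  · obtain ⟨s, hs, w, hw, hsw⟩ := hedge
    have hpos : 0 < degreeIn G S w := degreeIn_pos.2 ⟨s, hs, hsw.symm⟩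
    exact .of_insert hA hS hcard hw (h.hasTwoPaths_insert_of_adj hsum hA hS hs hw hsw)
      (by lia) (delete (mem_insert_of_mem ht))
  · push Not at hedge
    have hout : ∑ v ∈ S, degreeIn G (A \ S) v = 0 :=
      sum_eq_zero fun s hs => degreeIn_eq_zero.2 (hedge s hs)
    have hsplit := degreeSum_sdiff_add (G := G) hS
    exact .of_sdiff hS hpath (by lia) (delete ht)

end DenseFive

section LocallyOptimal

variable {V : Type*} {G : SimpleGraph V} {U : Finset V} {a b c d u x y z : V}

/-- Six times the charge that a path with vertex set `p` receives from the uncovered vertices `U`: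
along each edge to `p`, a vertex `u ∈ U` sends `1/3` if it is isolated in `U` and `1/2` if it has
one neighbour in `U`. -/
noncomputable def charge (G : SimpleGraph V) (U p : Finset V) : ℕ :=
  ∑ u ∈ U, (2 + degreeIn G U u) * degreeIn G p u

lemma charge_eq_sum_filter (U p : Finset V) :
    charge G U p = ∑ u ∈ U with 0 < degreeIn G p u, (2 + degreeIn G U u) * degreeIn G p u := by
  refine (sum_filter_of_ne fun u _ hne => ?_).symm
  exact Nat.pos_of_ne_zero (right_ne_zero_of_mul hne)

variable [DecidableEq V]

/-- The path `x y z` cannot be improved inside the union of its vertices with the set `U` of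
uncovered vertices: there is no room for two paths, and no other path `q` has a larger potential,
where every edge on the path weighs twice as much as an edge between uncovered vertices. -/
structure IsLocallyOptimal (G : SimpleGraph V) (U : Finset V) (x y z : V) : Prop where
  ne : x ≠ z
  adj_left : G.Adj x y
  adj_right : G.Adj y z
  disjoint : Disjoint {x, y, z} U
  isSubcubicOn : IsSubcubicOn G ({x, y, z} ∪ U)
  not_hasTwoPaths : ¬HasTwoPaths G ({x, y, z} ∪ U) 2
  potential_le : ∀ q ⊆ {x, y, z} ∪ U, IsTwoPath G q →
    2 * degreeSum G q + degreeSum G (({x, y, z} ∪ U) \ q) ≤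
      2 * degreeSum G {x, y, z} + degreeSum G U

namespace IsLocallyOptimal

lemma symm (h : IsLocallyOptimal G U x y z) : IsLocallyOptimal G U z y x := by
  have hrev : ({z, y, x} : Finset V) = {x, y, z} := by grind
  exact ⟨h.ne.symm, h.adj_right.symm, h.adj_left.symm, hrev ▸ h.disjoint, hrev ▸ h.isSubcubicOn,
    hrev ▸ h.not_hasTwoPaths, hrev ▸ h.potential_le⟩

lemma notMem (h : IsLocallyOptimal G U x y z) : x ∉ U ∧ y ∉ U ∧ z ∉ U := by
  simpa only [disjoint_insert_left, disjoint_singleton_left] using h.disjoint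

lemma degreeIn_add_le (h : IsLocallyOptimal G U x y z) (hu : u ∈ U) :
    degreeIn G {x, y, z} u + degreeIn G U u ≤ 3 := by
  rw [← degreeIn_union h.disjoint]
  exact h.isSubcubicOn u (mem_union_right _ hu)

lemma false_of_adj (h : IsLocallyOptimal G U x y z) {v₁ v₂ v₃ w₁ w₂ w₃ : V} (hv₁₂ : G.Adj v₁ v₂)
    (hv₂₃ : G.Adj v₂ v₃) (hw₁₂ : G.Adj w₁ w₂) (hw₂₃ : G.Adj w₂ w₃) (hv : v₁ ≠ v₃) (hw : w₁ ≠ w₃)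
    (hdisj : ∀ u ∈ ({v₁, v₂, v₃} : Finset V), u ∉ ({w₁, w₂, w₃} : Finset V))
    (hsub : {v₁, v₂, v₃} ∪ {w₁, w₂, w₃} ⊆ {x, y, z} ∪ U) : False :=
  have ⟨hvU, hwU⟩ := union_subset_iff.1 hsub
  h.not_hasTwoPaths <| hasTwoPaths_two (isTwoPath_triple hv₁₂ hv₂₃ hv)
    (isTwoPath_triple hw₁₂ hw₂₃ hw) (disjoint_left.2 hdisj) hvU hwU

lemma degreeIn_le_one (h : IsLocallyOptimal G U x y z) (hu : u ∈ U) : degreeIn G U u ≤ 1 := by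
  by_contra! hlt
  obtain ⟨s, hs, t, ht, hst, hus, hut⟩ := one_lt_degreeIn.1 hlt
  have := h.notMem
  have := h.ne
  have hxy := h.adj_left
  have hyz := h.adj_right
  exact h.false_of_adj hus.symm hut hxy hyz (by grind) (by grind)
      (by grind [G.ne_of_adj]) (by grind)

lemma not_adj_mid_of_adj_left (h : IsLocallyOptimal G U x y z) (hxz : ¬G.Adj x z) (ha : a ∈ U)
    (hxa : G.Adj x a) : ¬G.Adj y a := by
  intro hya
  have := h.notMem
  have hne : x ≠ a := hxa.ne
  have hrest := degreeSum_mono (G := G) (show U.erase a ⊆ ({x, y, z} ∪ U) \ {x, y, a} by grind)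
  have hle := h.potential_le {x, y, a} (by grind) (isTwoPath_triple h.adj_left hya hne)
  rw [degreeSum_triple h.adj_left hya hne, degreeSum_triple h.adj_left h.adj_right h.ne,
    degreeIn_singleton_of_adj hxa, degreeIn_singleton_of_not_adj hxz] at hle
  have hsum := degreeSum_erase_add (G := G) ha
  have := h.degreeIn_le_one ha
  lia

lemma degreeIn_eq_zero_of_adj_adj (h : IsLocallyOptimal G U x y z) (ha : a ∈ U) (hb : b ∈ U)
    (hab : a ≠ b) (hxa : G.Adj x a) (hxb : G.Adj x b) (hu : u ∈ U) (hua : u ≠ a) (hub : u ≠ b) :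
    degreeIn G {x, y, z} u = 0 := by
  have := h.notMem
  have := h.ne
  have hxy := h.adj_left
  have hyz := h.adj_right
  rw [degreeIn_eq_zero]
  intro v hv huv
  simp only [mem_insert, mem_singleton] at hv
  rcases hv with rfl | rfl | rfl
  · have hle := card_le_degreeIn (G := G) (v := v) (S := {y, a, b, u}) (T := {v, y, z} ∪ U)
      (by grind) (by simp [hxy, hxa, hxb, huv.symm])
    have hcard : #{y, a, b, u} = 4 := by grind
    have := h.isSubcubicOn v (by simp)
    lia
  · exact h.false_of_adj hxa.symm hxb huv hyz (by grind) (by grind)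
      (by grind [G.ne_of_adj]) (by grind)
  · exact h.false_of_adj hxa.symm hxb huv hyz.symm (by grind) (by grind)
      (by grind [G.ne_of_adj]) (by grind)

lemma degreeIn_mid_le_one (h : IsLocallyOptimal G U x y z) : degreeIn G U y ≤ 1 := by
  have hle := h.isSubcubicOn y (by simp)
  have htwo := card_le_degreeIn (G := G) (v := y) (S := {x, z}) (T := {x, y, z})
    (by grind) (by simp [h.adj_left.symm, h.adj_right])
  rw [card_pair h.ne] at htwo
  rw [degreeIn_union h.disjoint] at hle
  lia

lemma degreeIn_eq_zero_of_adj_three_left (h : IsLocallyOptimal G U x y z) (hc : c ∈ U) (ha : a ∈ U)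
    (hd : d ∈ U) (hca : c ≠ a) (hcd : c ≠ d) (had : a ≠ d) (hxc : G.Adj x c) (hya : G.Adj y a)
    (hzd : G.Adj z d) :
    degreeIn G U c = 0 := by
  have := h.notMem
  have := h.ne
  have hxy := h.adj_left
  have hyz := h.adj_right
  rw [degreeIn_eq_zero]
  intro c' hc' hcc'
  obtain rfl | hne := eq_or_ne c' d
  · exact h.false_of_adj hxc hcc' hya.symm hyz (by grind) (by grind)
      (by grind [G.ne_of_adj]) (by grind)
  · exact h.false_of_adj hcc'.symm hxc.symm hyz hzd (by grind) (by grind)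
      (by grind [G.ne_of_adj]) (by grind)

lemma degreeSum_le_degreeSum_erase_erase_add (h : IsLocallyOptimal G U x y z) (ha : a ∈ U)
    (hb : b ∈ U) (hab : G.Adj a b) : degreeSum G U ≤ degreeSum G ((U.erase a).erase b) + 2 := by
  have hUa := degreeSum_erase_add (G := G) ha
  have hUb := degreeSum_erase_add (G := G) (mem_erase_of_ne_of_mem hab.ne' hb)
  have hdeg := degreeIn_erase_add (G := G) ha b
  rw [degreeIn_singleton_of_adj hab.symm] at hdeg
  have := h.degreeIn_le_one ha
  have := h.degreeIn_le_one hb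
  lia

lemma degreeIn_eq_zero_of_adj_three_mid (h : IsLocallyOptimal G U x y z) (hc : c ∈ U) (ha : a ∈ U)
    (hd : d ∈ U) (hca : c ≠ a) (hcd : c ≠ d) (had : a ≠ d) (hxc : G.Adj x c) (hya : G.Adj y a)
    (hzd : G.Adj z d) :
    degreeIn G U a = 0 := by
  have := h.notMem
  have := h.ne
  have hyz := h.adj_right
  have hxy := h.adj_left
  have hc_zero := degreeIn_eq_zero.1
    (degreeIn_eq_zero_of_adj_three_left h hc ha hd hca hcd had hxc hya hzd)
  have hd_zero := degreeIn_eq_zero.1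
    (degreeIn_eq_zero_of_adj_three_left h.symm hd ha hc had.symm hcd.symm hca.symm hzd hya hxc)
  rw [degreeIn_eq_zero]
  intro a' ha' haa'
  have hca' : c ≠ a' := fun h => hc_zero a ha (h ▸ haa'.symm)
  have hda' : d ≠ a' := fun h => hd_zero a ha (h ▸ haa'.symm)
  by_cases hxz : G.Adj x z
  · exact h.false_of_adj haa'.symm hya.symm hxz hzd (by grind) (by grind)
      (by grind [G.ne_of_adj]) (by grind)
  -- Replacing `x y z` by `y a a'` uncovers the edges `x c` and `z d` at the cost of `a a'` only.
  have hle := h.potential_le {y, a, a'} (by grind) (isTwoPath_triple hya haa' (by grind))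
  have hfour := (isTwoPath_triple hya haa' (by grind)).four_le_degreeSum
  have hrest := degreeSum_mono (G := G) (T := ({x, y, z} ∪ U) \ {y, a, a'})
    (S := insert x (insert z ((U.erase a).erase a'))) (by grind [G.ne_of_adj])
  rw [degreeSum_insert (by grind), degreeSum_insert (by grind)] at hrest
  have hx_pos : 0 < degreeIn G (insert z ((U.erase a).erase a')) x :=
    degreeIn_pos.2 ⟨c, by grind, hxc⟩
  have hz_pos : 0 < degreeIn G ((U.erase a).erase a') z := degreeIn_pos.2 ⟨d, by grind, hzd⟩
  have hU := h.degreeSum_le_degreeSum_erase_erase_add ha ha' haa'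
  rw [degreeSum_triple hxy hyz h.ne, degreeIn_singleton_of_not_adj hxz] at hle
  lia

lemma adj_left_and_adj_right_of_one_lt_degreeIn (h : IsLocallyOptimal G U x y z)
    (hxz : ¬G.Adj x z) (ha : a ∈ U) (hlt : 1 < degreeIn G {x, y, z} a) :
    G.Adj a x ∧ G.Adj a z := by
  have hleft := h.not_adj_mid_of_adj_left hxz ha
  have hright := h.symm.not_adj_mid_of_adj_left (fun hzx => hxz hzx.symm) ha
  obtain ⟨s, hs, t, ht, hst, has, hat⟩ := one_lt_degreeIn.1 hlt
  simp only [mem_insert, mem_singleton] at hs ht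
  grind [G.adj_comm]

lemma degreeIn_eq_zero_of_adj_mid (h : IsLocallyOptimal G U x y z) (ha : a ∈ U) (hb : b ∈ U)
    (hab : a ≠ b) (hnadj : ¬G.Adj a b) (hax : G.Adj a x) (haz : G.Adj a z) (hby : G.Adj b y) :
    degreeIn G U a = 0 ∧ degreeIn G U b = 0 := by
  have := h.notMem
  have hne := h.ne
  have hxy := h.adj_left
  have hyz := h.adj_right
  simp only [degreeIn_eq_zero]
  constructor
  · intro a' ha' haa'
    exact h.false_of_adj haa'.symm hax hby hyz (by grind) (by grind) (by grind [G.ne_of_adj])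
      (by grind)
  · intro b' hb' hbb'
    have hab' : a ≠ b' := fun h => hnadj (h ▸ hbb'.symm)
    exact h.false_of_adj hbb'.symm hby hax.symm haz (by grind) hne (by grind [G.ne_of_adj])
      (by grind)

lemma degreeIn_eq_zero_of_adj_left (h : IsLocallyOptimal G U x y z) (ha : a ∈ U) (hb : b ∈ U)
    (hab : a ≠ b) (hnadj : ¬G.Adj a b) (haz : G.Adj a z) (hbx : G.Adj b x) :
    degreeIn G U a = 0 ∧ degreeIn G U b = 0 := by
  have := h.notMem
  have hne := h.ne
  have hxy := h.adj_left
  have hyz := h.adj_right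
  simp only [degreeIn_eq_zero]
  constructor
  · intro a' ha' haa'
    have hba' : b ≠ a' := fun h => hnadj (h ▸ haa')
    exact h.false_of_adj haa'.symm haz hbx hxy (by grind) (by grind) (by grind [G.ne_of_adj])
      (by grind)
  · intro b' hb' hbb'
    have hab' : a ≠ b' := fun h => hnadj (h ▸ hbb'.symm)
    exact h.false_of_adj hbb'.symm hbx haz hyz.symm (by grind) (by grind) (by grind [G.ne_of_adj])
      (by grind)

lemma degreeIn_eq_zero_of_one_lt_degreeIn (h : IsLocallyOptimal G U x y z) (hxz : ¬G.Adj x z)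
    (ha : a ∈ U) (hb : b ∈ U) (hab : a ≠ b) (hnadj : ¬G.Adj a b)
    (hlt : 1 < degreeIn G {x, y, z} a) (hpos : 0 < degreeIn G {x, y, z} b) :
    degreeIn G U a = 0 ∧ degreeIn G U b = 0 := by
  obtain ⟨hax, haz⟩ := h.adj_left_and_adj_right_of_one_lt_degreeIn hxz ha hlt
  obtain ⟨v, hv, hbv⟩ := degreeIn_pos.1 hpos
  simp only [mem_insert, mem_singleton] at hv
  rcases hv with rfl | rfl | rfl
  · exact h.degreeIn_eq_zero_of_adj_left ha hb hab hnadj haz hbv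
  · exact h.degreeIn_eq_zero_of_adj_mid ha hb hab hnadj hax haz hbv
  · exact h.symm.degreeIn_eq_zero_of_adj_left ha hb hab hnadj hax hbv

lemma degreeIn_add_degreeIn_le_three (h : IsLocallyOptimal G U x y z) (ha : a ∈ U) (hb : b ∈ U)
    (hab : a ≠ b) (hdense : ¬IsDenseFive G {a, b, x, y, z}) :
    degreeIn G {x, y, z} a + degreeIn G {x, y, z} b + degreeIn G {b} a + degreeIn G {z} x ≤ 3 := by
  have := h.notMem
  have hxz := h.ne
  have hxy := h.adj_left.ne
  have hyz := h.adj_right.ne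
  by_contra! hlt
  refine hdense ⟨by grind, ?_, h.isSubcubicOn.mono (by grind)⟩
  rw [degreeSum_insert (by grind), degreeSum_insert (by grind), degreeIn_insert (x := b) (by grind),
    degreeSum_triple h.adj_left h.adj_right hxz]
  lia

lemma charge_le_six_of_card_eq_two (h : IsLocallyOptimal G U x y z)
    (hdense : ∀ S ⊆ {x, y, z} ∪ U, ¬IsDenseFive G S)
    (hN : #{u ∈ U | 0 < degreeIn G {x, y, z} u} = 2) : charge G U {x, y, z} ≤ 6 := by
  obtain ⟨a, b, hab, hN⟩ := card_eq_two.1 hN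
  have hmem : ∀ u ∈ ({a, b} : Finset V), u ∈ U ∧ 0 < degreeIn G {x, y, z} u :=
    fun u hu => mem_filter.1 (hN ▸ hu)
  obtain ⟨⟨ha, hda⟩, hb, hdb⟩ := And.intro (hmem a (by simp)) (hmem b (by simp))
  rw [charge_eq_sum_filter, hN, sum_pair hab]
  have hle := h.degreeIn_add_degreeIn_le_three ha hb hab (hdense _ (by grind))
  have := h.degreeIn_le_one ha
  have := h.degreeIn_le_one hb
  by_cases hone : degreeIn G {x, y, z} a = 1 ∧ degreeIn G {x, y, z} b = 1
  · rw [hone.1, hone.2]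
    lia
  have hxz : ¬G.Adj x z := fun hadj => by
    rw [degreeIn_singleton_of_adj hadj] at hle
    lia
  have hnadj : ¬G.Adj a b := fun hadj => by
    rw [degreeIn_singleton_of_adj hadj] at hle
    lia
  have hzero : degreeIn G U a = 0 ∧ degreeIn G U b = 0 := by
    obtain hlt | hlt : 1 < degreeIn G {x, y, z} a ∨ 1 < degreeIn G {x, y, z} b := by lia
    · exact h.degreeIn_eq_zero_of_one_lt_degreeIn hxz ha hb hab hnadj hlt hdb
    · exact (h.degreeIn_eq_zero_of_one_lt_degreeIn hxz hb ha hab.symm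
        (fun hadj => hnadj hadj.symm) hlt hda).symm
  rw [hzero.1, hzero.2]
  lia

lemma degreeIn_left_le_one (h : IsLocallyOptimal G U x y z)
    (hN : 2 < #{u ∈ U | 0 < degreeIn G {x, y, z} u}) : degreeIn G U x ≤ 1 := by
  by_contra! hlt
  obtain ⟨a, ha, b, hb, hab, hxa, hxb⟩ := one_lt_degreeIn.1 hlt
  refine hN.not_ge (le_of_le_of_eq (card_le_card fun u hu => ?_) (card_pair hab))
  have := h.degreeIn_eq_zero_of_adj_adj ha hb hab hxa hxb (u := u)
  grind

lemma degreeIn_eq_zero_of_two_lt_card (h : IsLocallyOptimal G U x y z)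
    (hN : 2 < #{u ∈ U | 0 < degreeIn G {x, y, z} u}) (hx : degreeIn G U x = 1)
    (hy : degreeIn G U y = 1) (hz : degreeIn G U z = 1) (hu : u ∈ U)
    (hpos : 0 < degreeIn G {x, y, z} u) : degreeIn G U u = 0 := by
  obtain ⟨c, hc, hxc⟩ := degreeIn_pos.1 (hx ▸ one_pos)
  obtain ⟨a, ha, hya⟩ := degreeIn_pos.1 (hy ▸ one_pos)
  obtain ⟨d, hd, hzd⟩ := degreeIn_pos.1 (hz ▸ one_pos)
  have heq : ∀ v ∈ ({x, y, z} : Finset V), ∀ s ∈ U, ∀ t ∈ U, G.Adj v s → G.Adj v t → s = t := by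
    intro v hv s hs t ht hvs hvt
    by_contra hst
    have hlt := one_lt_degreeIn.2 ⟨s, hs, t, ht, hst, hvs, hvt⟩
    grind
  have hsub : {u ∈ U | 0 < degreeIn G {x, y, z} u} ⊆ {c, a, d} := by
    intro w hw
    obtain ⟨hwU, hw_pos⟩ := mem_filter.1 hw
    obtain ⟨v, hv, hwv⟩ := degreeIn_pos.1 hw_pos
    have := heq v hv w hwU
    have := hwv.symm
    grind
  have hcard : 2 < #{c, a, d} := hN.trans_le (card_le_card hsub)
  obtain ⟨hca, hcd, had⟩ : c ≠ a ∧ c ≠ d ∧ a ≠ d := by grind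
  have hmem : u ∈ ({c, a, d} : Finset V) := hsub (mem_filter.2 ⟨hu, hpos⟩)
  simp only [mem_insert, mem_singleton] at hmem
  rcases hmem with rfl | rfl | rfl
  · exact h.degreeIn_eq_zero_of_adj_three_left hc ha hd hca hcd had hxc hya hzd
  · exact h.degreeIn_eq_zero_of_adj_three_mid hc ha hd hca hcd had hxc hya hzd
  · exact h.symm.degreeIn_eq_zero_of_adj_three_left hd ha hc had.symm hcd.symm hca.symm hzd hya hxc

lemma charge_le_six_of_two_lt_card (h : IsLocallyOptimal G U x y z)
    (hN : 2 < #{u ∈ U | 0 < degreeIn G {x, y, z} u}) : charge G U {x, y, z} ≤ 6 := by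
  have hx := h.degreeIn_left_le_one hN
  have hy := h.degreeIn_mid_le_one
  have hrev : ({z, y, x} : Finset V) = {x, y, z} := by grind
  have hz := h.symm.degreeIn_left_le_one (hrev ▸ hN)
  have hsum : ∑ u ∈ U with 0 < degreeIn G {x, y, z} u, degreeIn G {x, y, z} u ≤
      degreeIn G U x + degreeIn G U y + degreeIn G U z := by
    refine (sum_le_sum_of_subset (filter_subset _ U)).trans_eq ?_
    rw [sum_degreeIn_comm, sum_insert (by simp [h.adj_left.ne, h.ne]), sum_pair h.adj_right.ne,
      add_assoc]
  have hcard : #{u ∈ U | 0 < degreeIn G {x, y, z} u} ≤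
      ∑ u ∈ U with 0 < degreeIn G {x, y, z} u, degreeIn G {x, y, z} u := by
    rw [card_eq_sum_ones]
    exact sum_le_sum fun u hu => (mem_filter.1 hu).2
  calc charge G U {x, y, z}
      = ∑ u ∈ U with 0 < degreeIn G {x, y, z} u, 2 * degreeIn G {x, y, z} u := by
        rw [charge_eq_sum_filter]
        refine sum_congr rfl fun u hu => ?_
        obtain ⟨huU, hpos⟩ := mem_filter.1 hu
        rw [h.degreeIn_eq_zero_of_two_lt_card hN (by lia) (by lia) (by lia) huU hpos]
    _ = 2 * ∑ u ∈ U with 0 < degreeIn G {x, y, z} u, degreeIn G {x, y, z} u := (mul_sum ..).symm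
    _ ≤ 6 := by lia

theorem charge_le_six (h : IsLocallyOptimal G U x y z)
    (hdense : ∀ S ⊆ {x, y, z} ∪ U, ¬IsDenseFive G S) : charge G U {x, y, z} ≤ 6 := by
  obtain hN | hN | hN | hN : #{u ∈ U | 0 < degreeIn G {x, y, z} u} = 0 ∨
      #{u ∈ U | 0 < degreeIn G {x, y, z} u} = 1 ∨ #{u ∈ U | 0 < degreeIn G {x, y, z} u} = 2 ∨
      2 < #{u ∈ U | 0 < degreeIn G {x, y, z} u} := by lia
  · rw [charge_eq_sum_filter, card_eq_zero.1 hN]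
    simp
  · obtain ⟨a, hN⟩ := card_eq_one.1 hN
    have ha : a ∈ U := (mem_filter.1 (hN ▸ mem_singleton_self a)).1
    rw [charge_eq_sum_filter, hN, sum_singleton]
    have := h.degreeIn_le_one ha
    have := h.degreeIn_add_le ha
    interval_cases degreeIn G U a <;> lia
  · exact h.charge_le_six_of_card_eq_two hdense hN
  · exact h.charge_le_six_of_two_lt_card hN

end IsLocallyOptimal

end LocallyOptimal

section OptimalPacking

variable {V : Type*} [DecidableEq V] {G : SimpleGraph V} {A p q : Finset V}
  {P Q : Finset (Finset V)} {u : V}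

/-- The vertices of `A` on none of the paths of `P`. -/
def uncovered (A : Finset V) (P : Finset (Finset V)) : Finset V :=
  A \ P.biUnion id

/-- The quantity maximised among the largest packings: edges within a path of `P` weigh twice as
much as edges between uncovered vertices. -/
noncomputable def potential (G : SimpleGraph V) (A : Finset V) (P : Finset (Finset V)) : ℕ :=
  2 * ∑ q ∈ P, degreeSum G q + degreeSum G (uncovered A P)

/-- `P` has the largest possible number of paths, and among such packings the largest potential. -/
structure IsOptimalPacking (G : SimpleGraph V) (A : Finset V) (P : Finset (Finset V)) : Prop
    extends IsTwoPathPacking G A P where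
  card_le : ∀ Q, IsTwoPathPacking G A Q → #Q ≤ #P
  potential_le : ∀ Q, IsTwoPathPacking G A Q → #Q = #P → potential G A Q ≤ potential G A P

lemma exists_isOptimalPacking (G : SimpleGraph V) (A : Finset V) :
    ∃ P, IsOptimalPacking G A P := by
  classical
  obtain ⟨P, hP, hmax⟩ := exists_max_image {P ∈ A.powerset.powerset | IsTwoPathPacking G A P}
    (fun P => toLex (#P, potential G A P))
      ⟨∅, mem_filter.2 ⟨by simp, by simp, by simp, by simp⟩⟩
  have hlex : ∀ Q, IsTwoPathPacking G A Q → #Q < #P ∨ #Q = #P ∧ potential G A Q ≤ potential G A P :=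
    fun Q hQ => Prod.Lex.toLex_le_toLex.1 <| hmax Q <|
      mem_filter.2 ⟨mem_powerset.2 fun q hq => mem_powerset.2 (hQ.subset q hq), hQ⟩
  exact ⟨P, (mem_filter.1 hP).2, fun Q hQ => by grind, fun Q hQ hcard => by grind⟩

namespace IsTwoPathPacking

lemma subset_sdiff_union (h : IsTwoPathPacking G A P) (hp : p ∈ P) (hq : q ∈ P.erase p) :
    q ⊆ A \ (p ∪ uncovered A P) := by
  have hqW : q ⊆ P.biUnion id := subset_biUnion_of_mem id (mem_of_mem_erase hq)
  have hqA := (h.erase hp).subset q hq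
  grind [uncovered]

lemma erase_union (h : IsTwoPathPacking G A P) (hp : p ∈ P)
    (hQ : IsTwoPathPacking G (p ∪ uncovered A P) Q) :
    IsTwoPathPacking G A (P.erase p ∪ Q) ∧ #(P.erase p ∪ Q) + 1 = #P + #Q := by
  have hrest : IsTwoPathPacking G (A \ (p ∪ uncovered A P)) (P.erase p) :=
    ⟨(h.erase hp).isTwoPath, fun q hq => h.subset_sdiff_union hp hq,
      (h.erase hp).pairwiseDisjoint⟩
  have hsub : p ∪ uncovered A P ⊆ A := union_subset (h.subset p hp) sdiff_subset
  refine ⟨sdiff_union_of_subset hsub ▸ hrest.union hQ sdiff_disjoint, ?_⟩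
  rw [card_union_of_disjoint (hrest.disjoint hQ sdiff_disjoint), add_right_comm,
    card_erase_add_one hp]

lemma uncovered_erase_union (h : IsTwoPathPacking G A P) (hp : p ∈ P) :
    uncovered A (P.erase p ∪ {q}) = (p ∪ uncovered A P) \ q := by
  have hW : P.biUnion id = p ∪ (P.erase p).biUnion id := by
    rw [← id_eq p, ← biUnion_insert, id_eq, insert_erase hp]
  have hdisj := (h.erase hp).biUnion_subset
  have hpA := h.subset p hp
  rw [uncovered, uncovered, hW, union_biUnion, singleton_biUnion, id_eq]
  grind

end IsTwoPathPacking

namespace IsOptimalPacking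

lemma not_hasTwoPaths_two (h : IsOptimalPacking G A P) (hp : p ∈ P) :
    ¬HasTwoPaths G (p ∪ uncovered A P) 2 := by
  rintro ⟨Q, hQ, hcard⟩
  obtain ⟨hPQ, hPQ_card⟩ := h.erase_union hp hQ
  have := h.card_le _ hPQ
  lia

lemma two_mul_degreeSum_add_le (h : IsOptimalPacking G A P) (hp : p ∈ P) (hq : IsTwoPath G q)
    (hqs : q ⊆ p ∪ uncovered A P) :
    2 * degreeSum G q + degreeSum G ((p ∪ uncovered A P) \ q) ≤
      2 * degreeSum G p + degreeSum G (uncovered A P) := by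
  have hQ : IsTwoPathPacking G (p ∪ uncovered A P) {q} :=
    ⟨by simpa using hq, by simpa using hqs, by simp⟩
  obtain ⟨hPQ, hPQ_card⟩ := h.erase_union hp hQ
  have hdisj : Disjoint (P.erase p) {q} := by
    by_contra hmem
    rw [disjoint_singleton_right, not_not] at hmem
    rw [union_eq_left.2 (singleton_subset_iff.2 hmem), card_erase_add_one hp] at hPQ_card
    simp at hPQ_card
  have hle := h.potential_le _ hPQ (by simpa using hPQ_card)
  rw [potential, potential, sum_union hdisj, sum_singleton, ← add_sum_erase P _ hp,
    h.uncovered_erase_union hp] at hle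
  lia

lemma exists_isLocallyOptimal (h : IsOptimalPacking G A P) (hA : IsSubcubicOn G A) (hp : p ∈ P) :
    ∃ x y z, p = {x, y, z} ∧ IsLocallyOptimal G (uncovered A P) x y z := by
  have hsub : p ∪ uncovered A P ⊆ A := union_subset (h.subset p hp) sdiff_subset
  have hdisj : Disjoint p (uncovered A P) :=
    disjoint_sdiff.mono_left (subset_biUnion_of_mem id hp)
  have hnot := h.not_hasTwoPaths_two hp
  have hpot := fun q hqs hq => h.two_mul_degreeSum_add_le (q := q) hp hq hqs
  obtain ⟨x, y, z, hxz, hxy, hyz, rfl⟩ := h.isTwoPath p hp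
  exact ⟨x, y, z, rfl, hxz, hxy, hyz, hdisj, hA.mono hsub, hnot, hpot⟩

lemma degreeIn_le_one (h : IsOptimalPacking G A P) (hu : u ∈ uncovered A P) :
    degreeIn G (uncovered A P) u ≤ 1 := by
  by_contra! hlt
  obtain ⟨s, hs, t, ht, hst, hus, hut⟩ := one_lt_degreeIn.1 hlt
  have hnew := (isTwoPath_triple hus.symm hut hst).hasTwoPaths (A := uncovered A P) (by grind)
  have hold : HasTwoPaths G (P.biUnion id) #P :=
    ⟨P, ⟨h.isTwoPath, fun q hq => subset_biUnion_of_mem id hq, h.pairwiseDisjoint⟩, rfl⟩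
  obtain ⟨Q, hQ, hcard⟩ := (hold.add hnew disjoint_sdiff).mono
    (union_sdiff_of_subset h.biUnion_subset).subset
  have := h.card_le Q hQ
  lia

/-- After discharging, an uncovered vertex retains at most 2 of its degree; both sides are
multiplied by 6. -/
lemma six_mul_degreeIn_le (h : IsOptimalPacking G A P) (hA : IsSubcubicOn G A)
    (hu : u ∈ uncovered A P) :
    6 * degreeIn G A u ≤
      12 + (2 + degreeIn G (uncovered A P) u) * degreeIn G (P.biUnion id) u := by
  have hone := h.degreeIn_le_one hu
  have hsplit : degreeIn G (uncovered A P) u + degreeIn G (P.biUnion id) u = degreeIn G A u :=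
    degreeIn_sdiff_add h.biUnion_subset u
  have hthree := hA u (sdiff_subset hu)
  interval_cases degreeIn G (uncovered A P) u <;> lia

lemma six_mul_sum_degreeIn_le (h : IsOptimalPacking G A P) (hA : IsSubcubicOn G A)
    (hcharge : ∀ p ∈ P, charge G (uncovered A P) p ≤ 6) :
    6 * ∑ u ∈ uncovered A P, degreeIn G A u ≤ 12 * #(uncovered A P) + 6 * #P :=
  calc 6 * ∑ u ∈ uncovered A P, degreeIn G A u
      ≤ ∑ u ∈ uncovered A P,
          (12 + (2 + degreeIn G (uncovered A P) u) * degreeIn G (P.biUnion id) u) := by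
        rw [mul_sum]
        exact sum_le_sum fun u hu => h.six_mul_degreeIn_le hA hu
    _ = 12 * #(uncovered A P) + ∑ p ∈ P, charge G (uncovered A P) p := by
        simp only [charge, degreeIn_biUnion h.pairwiseDisjoint, sum_add_distrib, sum_const,
          smul_eq_mul, mul_comm, mul_sum, sum_comm (s := P)]
    _ ≤ 12 * #(uncovered A P) + 6 * #P := by
        rw [mul_comm 6, ← smul_eq_mul #P]
        gcongr
        exact sum_le_card_nsmul _ _ _ hcharge

lemma degreeSum_le (h : IsOptimalPacking G A P) (hA : IsSubcubicOn G A)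
    (hcharge : ∀ p ∈ P, charge G (uncovered A P) p ≤ 6) :
    degreeSum G A ≤ 2 * #A + 4 * #P := by
  have huncovered := h.six_mul_sum_degreeIn_le hA hcharge
  have hcovered : ∑ v ∈ P.biUnion id, degreeIn G A v ≤ #(P.biUnion id) * 3 :=
    sum_le_card_nsmul _ _ _ fun v hv => hA v (h.biUnion_subset hv)
  have hcard : #(uncovered A P) + #(P.biUnion id) = #A :=
    card_sdiff_add_card_eq_card h.biUnion_subset
  rw [h.card_biUnion] at hcovered hcard
  rw [degreeSum, ← sum_sdiff h.biUnion_subset, ← uncovered]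
  lia

end IsOptimalPacking

theorem IsSubcubicOn.hasManyTwoPaths (hA : IsSubcubicOn G A) : HasManyTwoPaths G A := by
  induction hn : #A using Nat.strong_induction_on generalizing G A with
  | _ n ih =>
    subst hn
    by_cases hdense : ∃ S ⊆ A, IsDenseFive G S
    · obtain ⟨S, hS, hfive⟩ := hdense
      exact hfive.hasManyTwoPaths hS hA fun H B hB hBsub => ih _ hB hBsub rfl
    obtain ⟨P, hP⟩ := exists_isOptimalPacking G A
    refine ⟨#P, ⟨P, hP.toIsTwoPathPacking, rfl⟩, hP.degreeSum_le hA fun p hp => ?_⟩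
    have hpA : p ∪ uncovered A P ⊆ A := union_subset (hP.subset p hp) sdiff_subset
    obtain ⟨x, y, z, rfl, hopt⟩ := hP.exists_isLocallyOptimal hA hp
    exact hopt.charge_le_six fun S hS hfive => hdense ⟨S, hS.trans hpA, hfive⟩

end OptimalPacking

section Lambda

variable {V : Type*} {G : SimpleGraph V}

lemma IsTwoPath.exists_isKEdgePath [DecidableEq V] {q : Finset V} (h : IsTwoPath G q) :
    ∃ H : G.Subgraph, H.IsKEdgePath 2 ∧ H.verts = q := by
  obtain ⟨x, y, z, hxz, hxy, hyz, rfl⟩ := h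
  refine ⟨(hyz.toWalk.cons hxy).toSubgraph, ⟨x, z, _, ?_, rfl, rfl⟩, ?_⟩
  · simp [SimpleGraph.Walk.isPath_def, hxy.ne, hyz.ne, hxz]
  · ext v
    simp [or_rotate (a := v = z)]

lemma bddAbove_card_of_finite {α : Type*} [Finite α] (p : Finset α → Prop) :
    BddAbove {n | ∃ P : Finset α, p P ∧ #P = n} := by
  cases nonempty_fintype α
  exact ⟨Fintype.card α, fun n ⟨P, _, hn⟩ => hn ▸ card_le_univ P⟩

lemma HasTwoPaths.le_lambdaK [Finite V] [DecidableEq V] {A : Finset V} {k : ℕ}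
    (h : HasTwoPaths G A k) : k ≤ G.lambdaK 2 := by
  classical
  obtain ⟨P, hP, rfl⟩ := h
  choose! f hpath hverts using fun q hq => (hP.isTwoPath q hq).exists_isKEdgePath
  have hinj : Set.InjOn f P := fun q hq r hr hqr =>
    coe_injective (by rw [← hverts q hq, ← hverts r hr, hqr])
  refine le_csSup ?_ ⟨P.image f, ?_, ?_, card_image_of_injOn hinj⟩
  · simpa only [and_assoc] using bddAbove_card_of_finite (α := G.Subgraph) fun P =>
      (∀ H ∈ P, H.IsKEdgePath 2) ∧
        (P : Set G.Subgraph).Pairwise fun H H' => Disjoint H.verts H'.verts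
  · simpa using hpath
  · rw [coe_image]
    rintro _ ⟨q, hq, rfl⟩ _ ⟨r, hr, rfl⟩ hne
    rw [hverts q hq, hverts r hr, disjoint_coe]
    exact hP.pairwiseDisjoint hq hr (ne_of_apply_ne f hne)

end Lambda

lemma degreeIn_univ {V : Type*} [Fintype V] (G : SimpleGraph V) [DecidableRel G.Adj] (v : V) :
    degreeIn G univ v = G.degree v := by
  rw [degreeIn, ← G.card_neighborFinset_eq_degree, G.neighborFinset_eq_filter]
  congr

end TwoPathPacking

open TwoPathPacking in
theorem stmt_3_general {V : Type*} [Fintype V] (G : SimpleGraph V) [DecidableRel G.Adj]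
    (hdeg : ∀ v : V, G.degree v ≤ 3) :
    G.edgeFinset.card ≤ Fintype.card V + 2 * G.lambdaK 2 := by
  classical
  have hsub : IsSubcubicOn G Finset.univ := fun v _ => (degreeIn_univ G v).trans_le (hdeg v)
  obtain ⟨k, hk, hle⟩ := hsub.hasManyTwoPaths
  have hlambda : k ≤ G.lambdaK 2 := hk.le_lambdaK
  simp only [degreeSum, degreeIn_univ, G.sum_degrees_eq_twice_card_edges, Finset.card_univ] at hle
  lia

/-- Let `G` be a finite simple cubic graph (every vertex has degree exactly 3).
Then `λ(G) ≥ v(G)/4`. -/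
theorem stmt_3 {V : Type} [Fintype V] (G : SimpleGraph V) [DecidableRel G.Adj]
    (hdeg : ∀ v : V, G.degree v = 3) :
    (G.lambdaK 2 : ℚ) ≥ (Fintype.card V : ℚ) / 4 := by
  have hgeneral := stmt_3_general G fun v => (hdeg v).le
  have hedges := G.sum_degrees_eq_twice_card_edges
  simp only [hdeg, Finset.sum_const, Finset.card_univ, smul_eq_mul] at hedges
  have hle : (Fintype.card V : ℚ) ≤ 4 * G.lambdaK 2 := by exact_mod_cast (by lia)
  linarith
end
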